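/- arXiv:2408.09589 — 6 statements merged into one kernel-verified Lean document; each statement's English description precedes it below -/
import Mathlib

section
/- Let k ≥ 2, let G be a k-uniform hypergraph on n vertices, and let x be a fractional perfect matching of G. Then h(x) ≤ (1 − 1/k)·n·ln n. -/
/-!
Write `c = n ^ (k - 1)`. The tangent-line form of Jensen's inequality,
`t ln (1/t) ≤ t ln c + 1/c - t`, summed over the edges gives
`h(x) ≤ (∑ x[e]) ln c + |E| / c - ∑ x[e]`. Double counting vertex-edge incidences shows
`∑ x[e] = n / k`, so the first term is exactly `(1 - 1/k) n ln n`. The remaining terms are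
nonpositive because `k |E| ≤ k (n choose k) = n (n-1 choose k-1) ≤ n c`.
-/

open Finset

/-- The degree of a vertex set `S` in the hypergraph with edge set `E`:
the number of edges containing `S`. -/
def degS {n : ℕ} (E : Finset (Finset (Fin n))) (S : Finset (Fin n)) : ℕ :=
  (E.filter (fun e => S ⊆ e)).card

/-- The minimum `d`-degree of the hypergraph with edge set `E`. -/
noncomputable def minDeg {n : ℕ} (E : Finset (Finset (Fin n))) (d : ℕ) : ℕ :=
  sInf {m : ℕ | ∃ S : Finset (Fin n), S.card = d ∧ m = degS E S}

/-- `M` is a perfect matching of the hypergraph with edge set `E`. -/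
def IsPM {n : ℕ} (E M : Finset (Finset (Fin n))) : Prop :=
  M ⊆ E ∧ (∀ e ∈ M, ∀ f ∈ M, e ≠ f → Disjoint e f) ∧ ∀ v : Fin n, ∃ e ∈ M, v ∈ e

open scoped Classical in
/-- The number `Φ(G)` of perfect matchings of the hypergraph with edge set `E`. -/
noncomputable def numPM {n : ℕ} (E : Finset (Finset (Fin n))) : ℕ :=
  (E.powerset.filter (fun M => IsPM E M)).card

/-- `x` is a fractional perfect matching of the hypergraph with edge set `E`:
each edge gets a weight in `[0,1]`, non-edges get weight `0`, and the weights of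
the edges at each vertex sum to `1`. -/
def IsFPM {n : ℕ} (E : Finset (Finset (Fin n))) (x : Finset (Fin n) → ℝ) : Prop :=
  (∀ e, 0 ≤ x e ∧ x e ≤ 1) ∧ (∀ e, e ∉ E → x e = 0) ∧
    ∀ v : Fin n, ∑ e ∈ E.filter (fun e => v ∈ e), x e = 1

/-- The entropy `h(x) = ∑_e x[e] ln(1/x[e])` of an edge weighting.
(Since `Real.log (1/0) = 0`, the convention `0 ln 0 = 0` is automatic.) -/
noncomputable def fpmEntropy {n : ℕ} (E : Finset (Finset (Fin n))) (x : Finset (Fin n) → ℝ) : ℝ :=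
  ∑ e ∈ E, x e * Real.log (1 / x e)

/-- The entropy `h(G)`: the supremum of `h(x)` over fractional perfect matchings `x`. -/
noncomputable def graphEntropy {n : ℕ} (E : Finset (Finset (Fin n))) : ℝ :=
  sSup {h : ℝ | ∃ x, IsFPM E x ∧ h = fpmEntropy E x}

/-- `m_d(k,n)`: the least `D` such that every `n`-vertex `k`-graph with minimum
`d`-degree at least `D` has a perfect matching. -/
noncomputable def mThreshold (d k n : ℕ) : ℕ :=
  sInf {D : ℕ | ∀ E : Finset (Finset (Fin n)), (∀ e ∈ E, e.card = k) →
    (∀ S : Finset (Fin n), S.card = d → D ≤ degS E S) → ∃ M, IsPM E M}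

/-- `α` is the asymptotic Dirac threshold `α_d(k)`, i.e. the limit of
`m_d(k,n)/C(n-d, k-d)` as `n → ∞` along multiples of `k`. -/
def IsDiracThreshold (d k : ℕ) (α : ℝ) : Prop :=
  Filter.Tendsto
    (fun N : ℕ => (mThreshold d k (k * N) : ℝ) / ((k * N - d).choose (k - d) : ℝ))
    Filter.atTop (nhds α)

/-- The graph of `t ↦ t ln (1/t)` lies below its tangent line at `t = 1/c`. -/
theorem mul_log_inv_le_tangent {t c : ℝ} (ht : 0 ≤ t) (hc : 0 < c) :
    t * Real.log (1 / t) ≤ t * Real.log c + 1 / c - t := by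
  rcases ht.eq_or_lt with rfl | ht
  · simp [hc.le]
  · have h := Real.log_le_sub_one_of_pos (x := 1 / (t * c)) (by positivity)
    rw [one_div, Real.log_inv, Real.log_mul ht.ne' hc.ne'] at h
    have h2 := mul_le_mul_of_nonneg_left h ht.le
    have h3 : t * ((t * c)⁻¹ - 1) = 1 / c - t := by field_simp
    rw [one_div, Real.log_inv]
    linarith

/-- Double counting: the weights of a fractional perfect matching of a `k`-graph add up
to `n / k`. -/
theorem mul_sum_weight_eq {k n : ℕ} {E : Finset (Finset (Fin n))}
    (hE : ∀ e ∈ E, e.card = k) {x : Finset (Fin n) → ℝ} (hx : IsFPM E x) :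
    (k : ℝ) * ∑ e ∈ E, x e = n := by
  have h : ∑ v : Fin n, ∑ e ∈ E.filter (fun e => v ∈ e), x e = n := by
    simp [hx.2.2]
  rw [← h, mul_sum]
  simp_rw [sum_filter]
  rw [sum_comm]
  refine sum_congr rfl fun e he => ?_
  simp [hE e he]

theorem mul_card_edges_le {k n : ℕ} (hk : 1 ≤ k) (hn : 1 ≤ n)
    {E : Finset (Finset (Fin n))} (hE : ∀ e ∈ E, e.card = k) :
    k * E.card ≤ n * n ^ (k - 1) := by
  have h1 : E.card ≤ n.choose k := by
    have h := card_le_card (s := E) (t := powersetCard k univ)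
      fun e he => mem_powersetCard.2 ⟨subset_univ _, hE e he⟩
    simpa using h
  obtain ⟨j, rfl⟩ := Nat.exists_eq_add_of_le' hk
  obtain ⟨m, rfl⟩ := Nat.exists_eq_add_of_le' hn
  calc (j + 1) * E.card ≤ (j + 1) * (m + 1).choose (j + 1) := by gcongr
    _ = (m + 1) * m.choose j := by rw [Nat.add_one_mul_choose_eq, mul_comm]
    _ ≤ (m + 1) * (m + 1) ^ (j + 1 - 1) := by
      rw [Nat.add_sub_cancel]
      gcongr
      exact (Nat.choose_le_pow m j).trans (by gcongr; omega)

/-- For a `k`-graph `G` on `n` vertices (`k ≥ 2`) and any fractional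
perfect matching `x` of `G`, we have `h(x) ≤ (1 - 1/k)·n·ln n`. -/
theorem entropy_upper_bound_jensen (k n : ℕ) (hk : 2 ≤ k)
    (E : Finset (Finset (Fin n))) (hE : ∀ e ∈ E, e.card = k)
    (x : Finset (Fin n) → ℝ) (hx : IsFPM E x) :
    fpmEntropy E x ≤ (1 - 1 / (k : ℝ)) * n * Real.log n := by
  rcases Nat.eq_zero_or_pos n with rfl | hn
  · have h : E = ∅ := eq_empty_of_forall_notMem fun e he => by
      have := hE e he
      have := card_le_univ e
      simp only [Fintype.card_fin] at this
      omega
    simp [fpmEntropy, h]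
  have hk0 : (0 : ℝ) < k := by exact_mod_cast (by omega : 0 < k)
  have hc : (0 : ℝ) < (n : ℝ) ^ (k - 1) := by positivity
  have hcard : (k : ℝ) * E.card ≤ n * (n : ℝ) ^ (k - 1) := by
    exact_mod_cast mul_card_edges_le (by omega) hn hE
  have hsum : ∑ e ∈ E, x e = n / k := by
    rw [eq_div_iff hk0.ne', mul_comm]
    exact mul_sum_weight_eq hE hx
  have herr : (E.card : ℝ) * (1 / (n : ℝ) ^ (k - 1)) ≤ n / k := by
    rw [mul_one_div, div_le_div_iff₀ hc hk0]
    linarith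
  calc fpmEntropy E x
      ≤ ∑ e ∈ E, (x e * Real.log ((n : ℝ) ^ (k - 1)) + 1 / (n : ℝ) ^ (k - 1) - x e) :=
        sum_le_sum fun e _ => mul_log_inv_le_tangent (hx.1 e).1 hc
    _ = n / k * Real.log ((n : ℝ) ^ (k - 1)) + E.card * (1 / (n : ℝ) ^ (k - 1)) - n / k := by
        rw [sum_sub_distrib, sum_add_distrib, ← sum_mul, hsum, sum_const, nsmul_eq_mul]
    _ ≤ n / k * Real.log ((n : ℝ) ^ (k - 1)) := by linarith
    _ = (1 - 1 / (k : ℝ)) * n * Real.log n := by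
        rw [Real.log_pow, Nat.cast_sub (by omega)]
        field_simp
        push_cast
        ring
end

section
/- Let k ≥ 2, let G be a k-uniform hypergraph on n vertices with at least one edge, and let x be a fractional perfect matching of G such that x[e] ≤ L for every edge e, where L > 0. Then h(x) ≥ (n/k)·ln( n / (L²·k·|E(G)|) ). -/
/-!
Double counting incidences gives `∑ e, x e = n / k`. The bound `x e ≤ L` then has two
consequences: `log (1 / x e) ≥ log (1 / L)` on the support of `x`, so
`h(x) ≥ (n / k) * log (1 / L)`; and `n / k ≤ L * |E|`, which says exactly that
`n / (L ^ 2 * k * |E|) ≤ 1 / L`. Monotonicity of the logarithm combines the two, and no appeal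
to Jensen's inequality is needed.
-/

open Finset

/-- Double counting of the weighted vertex-edge incidences: the total weight of a fractional
perfect matching of a `k`-graph on `n` vertices is `n / k`. -/
theorem IsFPM.mul_sum_eq {n : ℕ} {E : Finset (Finset (Fin n))} {x : Finset (Fin n) → ℝ}
    (hx : IsFPM E x) (k : ℕ) (hE : ∀ e ∈ E, e.card = k) :
    (k : ℝ) * ∑ e ∈ E, x e = n := by
  have h : ∑ v : Fin n, ∑ e ∈ E.filter (fun e => v ∈ e), x e = n := by
    simp [hx.2.2]
  rw [← h, mul_sum]
  simp_rw [sum_filter]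
  rw [sum_comm]
  refine sum_congr rfl fun e he => ?_
  simp [← hE e he]

/-- An upper bound `L` on the weights bounds the entropy from below by `log (1 / L)` times the
total weight. -/
theorem IsFPM.sum_mul_log_le_fpmEntropy {n : ℕ} {E : Finset (Finset (Fin n))}
    {x : Finset (Fin n) → ℝ} (hx : IsFPM E x) {L : ℝ} (hxL : ∀ e ∈ E, x e ≤ L) :
    (∑ e ∈ E, x e) * Real.log (1 / L) ≤ fpmEntropy E x := by
  rw [fpmEntropy, sum_mul]
  refine sum_le_sum fun e he => ?_
  rcases (hx.1 e).1.eq_or_lt with h0 | h0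
  · simp [← h0]
  · have hL : 0 < L := h0.trans_le (hxL e he)
    have := hxL e he
    gcongr

/-- For a `k`-graph `G` on `n` vertices (`k ≥ 2`) with at least one edge,
and a fractional perfect matching `x` with `x[e] ≤ L` for all edges `e` (`L > 0`), we have
`h(x) ≥ (n/k)·ln(n/(L²·k·|E(G)|))`. -/
theorem entropy_lower_bound_jensen (k n : ℕ) (hk : 2 ≤ k)
    (E : Finset (Finset (Fin n))) (hE : ∀ e ∈ E, e.card = k) (hne : E.Nonempty)
    (x : Finset (Fin n) → ℝ) (hx : IsFPM E x)
    (L : ℝ) (hL : 0 < L) (hxL : ∀ e ∈ E, x e ≤ L) :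
    ((n : ℝ) / k) * Real.log ((n : ℝ) / (L ^ 2 * k * (E.card : ℝ))) ≤ fpmEntropy E x := by
  have hk0 : (0 : ℝ) < k := by exact_mod_cast (by omega : 0 < k)
  have hm : (0 : ℝ) < E.card := by exact_mod_cast hne.card_pos
  have hn : (0 : ℝ) < n := by
    obtain ⟨e, he⟩ := hne
    have h := card_le_univ e
    rw [hE e he, Fintype.card_fin] at h
    exact_mod_cast (by omega : 0 < n)
  have hS := hx.mul_sum_eq k hE
  have hSle : ∑ e ∈ E, x e ≤ E.card * L := by
    simpa using sum_le_card_nsmul E x L hxL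
  have hSeq : (n : ℝ) / k = ∑ e ∈ E, x e := by
    rw [← hS]
    field_simp
  refine le_trans ?_ (hx.sum_mul_log_le_fpmEntropy hxL)
  rw [← hSeq]
  have hle : (n : ℝ) / (L ^ 2 * k * (E.card : ℝ)) ≤ 1 / L := by
    rw [div_le_div_iff₀ (by positivity) hL, ← hS]
    have := mul_le_mul_of_nonneg_left hSle (by positivity : 0 ≤ (k : ℝ) * L)
    nlinarith
  gcongr
end

section
/- Fix integers 1 ≤ d < k and a real constant γ > 0, and let α = α_d(k) be the asymptotic Dirac threshold. There exist a constant C = C(d,k,γ) ≥ 1 and n₀ such that for every n ≥ n₀ divisible by k, every n-vertex k-uniform hypergraph G with minimum d-degree δ_d(G) ≥ (α + γ)·C(n−d, k−d) admits a C-well-distributed fractional perfect matching, i.e., a fractional perfect matching x with 1/(C·n^{k−1}) ≤ x[e] ≤ C/n^{k−1} for every edge e of G. -/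
open Finset

/-!
Fix a large constant `M`, divisible by `k`, and sample a uniformly random map `f : Fin M → Fin n`.
The hypergraph pulled back along `f` to the `M` sample points typically inherits the minimum degree
condition with only a small loss, so by the definition of the Dirac threshold it has a perfect
matching. Averaging the images of these perfect matchings over the good maps `f` spreads the weight
evenly over the edges of `G`, since every edge is the image of a bounded number of matching edges
per map and every edge is hit by only `O(n^(M-k))` maps. Two points need care.

* *The good maps are overwhelming* (`bad_card`). Among the maps with `f i = v` fixed, a fraction of
  at most `1/(16 * M)` is bad. The union bound over the `d`-subsets of the sample costs `M^d`, so an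
  exponential tail is needed. The degree of a `d`-set in the sample is a U-statistic; as in
  Hoeffding's argument, it is an average over permutations of sums over disjoint blocks, and
  Jensen's inequality for `exp` reduces its exponential moment to that of a sum of independent
  variables (`sum_exp_liftDeg`, `card_low_liftDeg`).
* *The marginals can be prescribed exactly* (`exists_weights`). Putting constant weight on the good
  maps gives every vertex nearly the right load. The small errors are repaired by transporting
  weight between each pair `u`, `v` of vertices, along the many pairs of good maps that differ only
  in the first coordinate, where one takes the value `u` and the other the value `v`.

Prescribing the load `1 - c * deg v` with `c` of order `n^(1-k)`, and then adding `c` to every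
edge, yields a fractional perfect matching that is also bounded below (`fpm_of_good`).
-/

/-! ### Counting maps and permutations -/

lemma card_forall_mem {ι V : Type*} [Fintype ι] [DecidableEq ι] [Fintype V] [DecidableEq V]
    (A : Finset ι) (e : Finset V) :
    (univ.filter fun f : ι → V => ∀ i ∈ A, f i ∈ e).card
      = e.card ^ A.card * Fintype.card V ^ (Fintype.card ι - A.card) := by
  have h : (univ.filter fun f : ι → V => ∀ i ∈ A, f i ∈ e)
      = Fintype.piFinset (fun j => if j ∈ A then e else univ) := by
    ext f
    simp only [mem_filter, mem_univ, true_and, Fintype.mem_piFinset]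
    refine forall_congr' fun i => ?_
    by_cases hi : i ∈ A <;> simp [hi]
  rw [h, Fintype.card_piFinset]
  have : ∀ j, (if j ∈ A then e else univ : Finset V).card
      = if j ∈ A then e.card else Fintype.card V := by
    intro j; split_ifs <;> simp
  simp only [this]
  rw [Finset.prod_ite, prod_const, prod_const]
  congr 2
  · simp
  · rw [filter_not, card_sdiff_of_subset (by simp)]
    simp

lemma card_apply_eq {ι V : Type*} [Fintype ι] [DecidableEq ι] [Fintype V] [DecidableEq V]
    (i : ι) (v : V) :
    (univ.filter fun f : ι → V => f i = v).card = Fintype.card V ^ (Fintype.card ι - 1) := by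
  simpa using card_forall_mem (V := V) {i} {v}

/-- A coincidence `f a = f b` costs a factor `n`: overwriting the value at `b` recovers all maps
with `f i = v`. -/
lemma card_coincide {ι V : Type*} [Fintype ι] [DecidableEq ι] [Fintype V] [DecidableEq V]
    (i a b : ι) (v : V) (hab : a ≠ b) (hb : b ≠ i) :
    Fintype.card V * (univ.filter fun f : ι → V => f i = v ∧ f a = f b).card
      ≤ Fintype.card V ^ (Fintype.card ι - 1) := by
  rw [← card_apply_eq i v, ← Finset.card_univ, ← card_product]
  refine card_le_card_of_injOn (fun p => Function.update p.2 b p.1) ?_ ?_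
  · rintro ⟨x, f⟩ hf
    simp only [coe_product, Set.mem_prod, mem_coe, mem_filter, mem_univ, true_and] at hf
    simp [Function.update_of_ne hb.symm, hf.1]
  · rintro ⟨x, f⟩ hf ⟨y, g⟩ hg h
    simp only [coe_product, Set.mem_prod, mem_coe, mem_filter, mem_univ, true_and] at hf hg h
    have hxy : x = y := by simpa using congrFun h b
    have hne : ∀ j, j ≠ b → f j = g j := fun j hj => by
      simpa [Function.update_of_ne hj] using congrFun h j
    refine Prod.ext hxy (funext fun j => ?_)
    by_cases hj : j = b
    · subst hj
      have := hne a hab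
      rw [hf.2, hg.2] at this
      exact this
    · exact hne j hj

lemma exists_perm_map {W : Type*} [Fintype W] [DecidableEq W] (S T : Finset W)
    (h : S.card = T.card) : ∃ π : Equiv.Perm W, S.image π = T := by
  let e : {x // x ∈ S} ≃ {x // x ∈ T} := Fintype.equivOfCardEq (by simpa using h)
  refine ⟨e.extendSubtype, ?_⟩
  apply eq_of_subset_of_card_le
  · intro x hx
    obtain ⟨y, hy, rfl⟩ := mem_image.1 hx
    exact e.extendSubtype_mem y hy
  · rw [card_image_of_injective _ (Equiv.injective _), h]

/-- A uniformly random permutation of `W` sends a fixed set `B` to a uniformly random set of the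
same size. -/
lemma card_perm_image {W : Type*} [Fintype W] [DecidableEq W] (B : Finset W)
    (F : Finset (Finset W)) (hF : ∀ T ∈ F, T.card = B.card) :
    (univ.filter fun σ : Equiv.Perm W => B.image σ ∈ F).card * (Fintype.card W).choose B.card
      = (Fintype.card W).factorial * F.card := by
  let c := (univ.filter fun σ : Equiv.Perm W => B.image σ = B).card
  have hc : ∀ T : Finset W, T.card = B.card →
      (univ.filter fun σ : Equiv.Perm W => B.image σ = T).card = c := by
    intro T hT
    obtain ⟨π, hπ⟩ := exists_perm_map B T hT.symm
    refine (card_bij (fun σ _ => π * σ) ?_ ?_ ?_).symm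
    · intro σ hσ
      simp only [mem_filter, mem_univ, true_and] at hσ ⊢
      rw [Equiv.Perm.coe_mul, ← image_image, hσ, hπ]
    · intro σ _ τ _ h; exact mul_left_cancel h
    · intro σ hσ
      simp only [mem_filter, mem_univ, true_and] at hσ
      refine ⟨π⁻¹ * σ, ?_, by simp⟩
      simp only [mem_filter, mem_univ, true_and]
      rw [Equiv.Perm.coe_mul, ← image_image, hσ, ← hπ, image_image, ← Equiv.Perm.coe_mul]
      simp
  have key : ∀ F : Finset (Finset W), (∀ T ∈ F, T.card = B.card) →
      (univ.filter fun σ : Equiv.Perm W => B.image σ ∈ F).card = F.card * c := by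
    intro F hF
    rw [card_eq_sum_card_fiberwise (f := fun σ : Equiv.Perm W => B.image σ) (t := F)
      (fun σ hσ => by simpa using hσ)]
    rw [← smul_eq_mul, ← sum_const]
    refine sum_congr rfl fun T hT => ?_
    rw [← hc T (hF T hT), filter_filter]
    congr 1; ext σ
    simp only [mem_filter, mem_univ, true_and]
    exact ⟨fun h => h.2, fun h => ⟨h ▸ hT, h⟩⟩
  have htot := key (powersetCard B.card univ) (fun T hT => (mem_powersetCard.1 hT).2)
  rw [filter_true_of_mem (fun σ _ => by
    simp [mem_powersetCard, card_image_of_injective _ (Equiv.injective σ)]), card_univ,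
    Fintype.card_perm, card_powersetCard, card_univ] at htot
  rw [key F hF, htot]; ring

/-- Independence of the restrictions of a uniformly random map to disjoint blocks: `e` splits `W`
into `L` blocks of size `r` and `s` spare points. -/
lemma sum_prod_blocks {W V : Type*} [Fintype W] [DecidableEq W] [Fintype V] [DecidableEq V]
    {L r s : ℕ} (e : (Fin L × Fin r) ⊕ Fin s ≃ W) (φ : (Fin r → V) → ℝ) :
    ∑ h : W → V, ∏ j, φ (fun a => h (e (Sum.inl (j, a))))
      = (∑ τ, φ τ) ^ L * (Fintype.card V : ℝ) ^ s := by
  let E : (W → V) ≃ (Fin L → Fin r → V) × (Fin s → V) :=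
    (Equiv.arrowCongr e.symm (Equiv.refl V)).trans
      ((Equiv.sumArrowEquivProdArrow _ _ _).trans
        (Equiv.prodCongr (Equiv.curry _ _ _) (Equiv.refl _)))
  have hE : ∑ h : W → V, ∏ j, φ (fun a => h (e (Sum.inl (j, a))))
      = ∑ p : (Fin L → Fin r → V) × (Fin s → V), ∏ j, φ (p.1 j) :=
    Fintype.sum_equiv E _ _ (fun h => rfl)
  rw [hE, Fintype.sum_prod_type]
  simp only [sum_const, card_univ, Fintype.card_fun, Fintype.card_fin, nsmul_eq_mul]
  rw [← mul_sum, Fintype.sum_pow, mul_comm]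
  push_cast; rfl

/-- Each `r`-set is the image of (at least, in fact exactly) `r!` tuples of length `r`. -/
lemma card_tuples {V : Type*} [Fintype V] [DecidableEq V] {r : ℕ} (P : Finset (Finset V))
    (hP : ∀ T ∈ P, T.card = r) :
    r.factorial * P.card ≤ (univ.filter fun τ : Fin r → V => univ.image τ ∈ P).card := by
  rw [card_eq_sum_card_fiberwise (f := fun τ : Fin r → V => univ.image τ) (t := P)
      (fun σ hσ => by simpa using hσ), mul_comm, ← smul_eq_mul, ← sum_const]
  refine sum_le_sum fun T hT => ?_
  have h1 : Fintype.card (Fin r ≃ {x // x ∈ T}) = r.factorial := by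
    rw [Fintype.card_equiv (Fintype.equivOfCardEq (by simp [hP T hT]))]; simp
  rw [← h1, ← card_univ]
  refine card_le_card_of_injOn (fun g a => (g a : V)) ?_ ?_
  · intro g _
    have : univ.image (fun a => (g a : V)) = T := by
      ext x; simp only [mem_image, mem_univ, true_and]
      exact ⟨fun ⟨a, ha⟩ => ha ▸ (g a).2, fun hx => ⟨g.symm ⟨x, hx⟩, by simp⟩⟩
    simp only [coe_filter, mem_filter, mem_univ, true_and, Set.mem_ofPred_eq]
    exact ⟨by rw [this]; exact hT, this⟩
  · intro g _ g' _ h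
    ext a; exact congrFun h a

/-! ### Concentration of degrees in a random sample -/

lemma exp_neg_le {t : ℝ} (ht : 0 ≤ t) : Real.exp (-t) ≤ 1 - t + t ^ 2 / 2 := by
  have h := Real.quadratic_le_exp_of_nonneg ht
  have hp : Real.exp (-t) * Real.exp t = 1 := by rw [← Real.exp_add]; simp
  have h0 := Real.exp_pos (-t)
  have h2 : 0 ≤ 1 - t + t ^ 2 / 2 := by nlinarith [sq_nonneg (t - 1)]
  have h3 : 1 ≤ (1 - t + t ^ 2 / 2) * Real.exp t := by
    have := mul_le_mul_of_nonneg_left h h2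
    nlinarith [sq_nonneg (t ^ 2)]
  nlinarith [Real.exp_pos t]

/-- The number of `r`-subsets `T` of `W` whose image under `h` belongs to `P`. When the members of `P`
are `r`-sets, `h` is automatically injective on such a `T`. -/
def liftDeg {W V : Type*} [Fintype W] [DecidableEq W] [DecidableEq V]
    (r : ℕ) (P : Finset (Finset V)) (h : W → V) : ℕ :=
  ((powersetCard r (univ : Finset W)).filter fun T => T.image h ∈ P).card

/-- Hoeffding's exponential moment bound for the U-statistic `liftDeg`: it is an average, over
permutations of `W`, of sums over the `L` disjoint blocks given by `e`; Jensen's inequality then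
compares it with a sum of independent variables. -/
lemma sum_exp_liftDeg {W V : Type*} [Fintype W] [DecidableEq W] [Fintype V] [DecidableEq V]
    {L r s : ℕ} (e : (Fin L × Fin r) ⊕ Fin s ≃ W) (P : Finset (Finset V)) (t : ℝ) :
    ∑ h : W → V, Real.exp (-t * (L * (liftDeg r P h / (Fintype.card W).choose r)))
      ≤ (∑ τ : Fin r → V, Real.exp (-t * if univ.image τ ∈ P then 1 else 0)) ^ L
        * (Fintype.card V : ℝ) ^ s := by
  classical
  set N := Fintype.card W with hN
  let X : (W → V) → ℝ := fun h => ∏ j : Fin L,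
    Real.exp (-t * if (univ.image fun a => h (e (Sum.inl (j, a)))) ∈ P then 1 else 0)
  have hrN : ∀ j : Fin L, r ≤ N := fun j => by
    have := Fintype.card_congr e
    simp only [Fintype.card_sum, Fintype.card_prod, Fintype.card_fin] at this
    have hL : 1 ≤ L := by have := j.2; omega
    nlinarith
  have hfac : (0:ℝ) < N.factorial := by exact_mod_cast N.factorial_pos
  have key : ∀ h : W → V, Real.exp (-t * (L * (liftDeg r P h / N.choose r)))
      ≤ ∑ σ : Equiv.Perm W, (1 / (N.factorial : ℝ)) * X (h ∘ σ) := by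
    intro h
    -- For each block, averaging its indicator over all permutations gives the density of lifted sets.
    have hj : ∀ j : Fin L, ∑ σ : Equiv.Perm W, (1 / (N.factorial : ℝ)) *
        (if (univ.image fun a => (h ∘ σ) (e (Sum.inl (j, a)))) ∈ P then (1:ℝ) else 0)
        = liftDeg r P h / N.choose r := by
      intro j
      let B : Finset W := univ.image fun a : Fin r => e (Sum.inl (j, a))
      have hB : B.card = r := by
        rw [card_image_of_injective _ (fun a b hab => by simpa using hab)]; simp
      have h1 := card_perm_image B
        ((powersetCard r (univ : Finset W)).filter fun T => T.image h ∈ P)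
        (fun T hT => by rw [hB]; exact (mem_powersetCard.1 (mem_filter.1 hT).1).2)
      have h2 : (univ.filter fun σ : Equiv.Perm W => B.image σ ∈
          ((powersetCard r (univ : Finset W)).filter fun T => T.image h ∈ P))
          = univ.filter fun σ : Equiv.Perm W =>
            (univ.image fun a => (h ∘ σ) (e (Sum.inl (j, a)))) ∈ P := by
        ext σ
        simp only [mem_filter, mem_univ, true_and, mem_powersetCard, subset_univ,
          card_image_of_injective _ (Equiv.injective σ), hB]
        rw [image_image, image_image]; rfl
      rw [h2, hB] at h1
      rw [← mul_sum, sum_boole]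
      have hch : (0:ℝ) < N.choose r := by exact_mod_cast Nat.choose_pos (hrN j)
      rw [eq_div_iff hch.ne', mul_assoc, one_div, inv_mul_eq_iff_eq_mul₀ hfac.ne']
      exact_mod_cast h1
    have h3 : -t * (L * (liftDeg r P h / N.choose r : ℝ))
        = ∑ σ : Equiv.Perm W, (1 / (N.factorial : ℝ)) * ∑ j : Fin L,
          (-t * if (univ.image fun a => (h ∘ σ) (e (Sum.inl (j, a)))) ∈ P then (1:ℝ) else 0) := by
      simp only [mul_sum]
      rw [sum_comm]
      have : ∀ j : Fin L, ∑ σ : Equiv.Perm W, (1 / (N.factorial : ℝ)) *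
        (-t * if (univ.image fun a => (h ∘ σ) (e (Sum.inl (j, a)))) ∈ P then (1:ℝ) else 0)
        = -t * (liftDeg r P h / N.choose r) := by
        intro j
        rw [← hj j, mul_sum]
        exact sum_congr rfl fun σ _ => by ring
      rw [sum_congr rfl (fun j _ => this j)]
      simp; ring
    rw [h3]
    refine (convexOn_exp.map_sum_le (t := univ) (w := fun _ : Equiv.Perm W => 1 / (N.factorial : ℝ))
      (fun _ _ => by positivity) ?_ (fun _ _ => Set.mem_univ _)).trans (le_of_eq ?_)
    · simp [Fintype.card_perm, ← hN, hfac.ne']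
    · refine sum_congr rfl fun σ _ => ?_
      rw [smul_eq_mul, Real.exp_sum]
  calc _ ≤ ∑ h : W → V, ∑ σ : Equiv.Perm W, (1 / (N.factorial : ℝ)) * X (h ∘ σ) :=
        sum_le_sum fun h _ => key h
    _ = ∑ σ : Equiv.Perm W, (1 / (N.factorial : ℝ)) * ∑ h : W → V, X h := by
        rw [sum_comm]
        refine sum_congr rfl fun σ _ => ?_
        rw [← mul_sum]
        congr 1
        exact Fintype.sum_equiv (Equiv.arrowCongr σ.symm (Equiv.refl V)) _ _ (fun h => rfl)
    _ = ∑ h : W → V, X h := by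
        simp [Fintype.card_perm, ← hN, hfac.ne']
    _ = _ := sum_prod_blocks e (fun τ => Real.exp (-t * if univ.image τ ∈ P then 1 else 0))

/-- Chernoff bound: if `P` has density at least `p` among the `r`-tuples, then the maps `h` for
which the density of lifted sets drops below `p - δ` form an exponentially small fraction. -/
lemma card_low_liftDeg {W V : Type*} [Fintype W] [DecidableEq W] [Fintype V] [DecidableEq V]
    {r : ℕ} (P : Finset (Finset V)) (hP : ∀ T ∈ P, T.card = r) (p δ : ℝ) (hp : 0 ≤ p)
    (hδ : 0 ≤ δ) (hV : 0 < Fintype.card V)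
    (hpP : p * (Fintype.card V : ℝ) ^ r ≤ r.factorial * P.card) :
    ((univ.filter fun h : W → V =>
        (liftDeg r P h : ℝ) < (p - δ) * (Fintype.card W).choose r).card : ℝ)
      ≤ (Fintype.card V : ℝ) ^ Fintype.card W
        * Real.exp (-((Fintype.card W / r : ℕ) * δ ^ 2 / 2)) := by
  classical
  set N := Fintype.card W with hN
  set L := N / r with hL
  set n : ℝ := (Fintype.card V : ℝ) with hn
  have hn0 : 0 < n := by rw [hn]; exact_mod_cast hV
  have hLr : L * r + (N - L * r) = N := by
    have : L * r ≤ N := Nat.div_mul_le_self N r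
    omega
  let e : (Fin L × Fin r) ⊕ Fin (N - L * r) ≃ W :=
    Fintype.equivOfCardEq (by simpa using hLr)
  have h1 := sum_exp_liftDeg e P δ
  have hcnt : p * n ^ r ≤ ((univ.filter fun τ : Fin r → V => univ.image τ ∈ P).card : ℝ) :=
    hpP.trans (by exact_mod_cast card_tuples P hP)
  set q : ℝ := ((univ.filter fun τ : Fin r → V => univ.image τ ∈ P).card : ℝ) with hq
  have hq1 : q ≤ n ^ r := by
    rw [hq, hn]
    have : (univ.filter fun τ : Fin r → V => univ.image τ ∈ P).card ≤ Fintype.card V ^ r :=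
      (card_le_univ _).trans (by simp)
    exact_mod_cast this
  have hnr : 0 < n ^ r := by positivity
  have hp1 : p ≤ 1 := by
    by_contra! h
    nlinarith
  have hsum : ∑ τ : Fin r → V, Real.exp (-δ * if univ.image τ ∈ P then 1 else 0)
      = n ^ r - (1 - Real.exp (-δ)) * q := by
    have : ∀ τ : Fin r → V, Real.exp (-δ * if univ.image τ ∈ P then 1 else 0)
        = 1 - (1 - Real.exp (-δ)) * (if univ.image τ ∈ P then 1 else 0) := by
      intro τ; split_ifs <;> simp
    simp only [this]
    rw [sum_sub_distrib, ← mul_sum, sum_boole]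
    simp [hn, hq]
  have hexp := exp_neg_le hδ
  have hexp1 : Real.exp (-δ) ≤ 1 := by simpa using hδ
  have hbase : n ^ r - (1 - Real.exp (-δ)) * q ≤ n ^ r * Real.exp (-(p * δ - δ ^ 2 / 2)) := by
    have h2 := Real.add_one_le_exp (-(p * δ - δ ^ 2 / 2))
    have h3 : (1 - Real.exp (-δ)) * (p * n ^ r) ≤ (1 - Real.exp (-δ)) * q :=
      mul_le_mul_of_nonneg_left hcnt (by linarith)
    have h4 : p * δ - δ ^ 2 / 2 ≤ (1 - Real.exp (-δ)) * p := by nlinarith [sq_nonneg δ]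
    nlinarith
  have hbase0 : 0 ≤ n ^ r - (1 - Real.exp (-δ)) * q := by
    rw [← hsum]; exact sum_nonneg fun _ _ => (Real.exp_pos _).le
  rw [hsum] at h1
  -- Markov's inequality for the exponential moment, with the exponent `t = δ`.
  have h5 : ((univ.filter fun h : W → V =>
        (liftDeg r P h : ℝ) < (p - δ) * N.choose r).card : ℝ)
        * Real.exp (-δ * (L * (p - δ)))
      ≤ ∑ h : W → V, Real.exp (-δ * (L * (liftDeg r P h / N.choose r))) := by
    rw [← nsmul_eq_mul, ← sum_const]
    refine (sum_le_sum fun h hh => ?_).trans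
      (sum_le_sum_of_subset_of_nonneg (filter_subset _ _) fun _ _ _ => (Real.exp_pos _).le)
    simp only [mem_filter, mem_univ, true_and] at hh
    rw [Real.exp_le_exp]
    have hch : (0:ℝ) < N.choose r := by
      rcases Nat.eq_zero_or_pos (N.choose r) with h0 | h0
      · rw [h0] at hh; simp at hh
        exact absurd hh (not_lt.2 (Nat.cast_nonneg _))
      · exact_mod_cast h0
    have : (liftDeg r P h : ℝ) / N.choose r ≤ p - δ := by
      rw [div_le_iff₀ hch]; exact hh.le
    have h6 : (L:ℝ) * (liftDeg r P h / N.choose r) ≤ L * (p - δ) :=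
      mul_le_mul_of_nonneg_left this (Nat.cast_nonneg _)
    nlinarith
  have h7 : (n ^ r - (1 - Real.exp (-δ)) * q) ^ L * n ^ (N - L * r)
      ≤ n ^ N * Real.exp (-(L * (p * δ - δ ^ 2 / 2))) := by
    calc _ ≤ (n ^ r * Real.exp (-(p * δ - δ ^ 2 / 2))) ^ L * n ^ (N - L * r) := by gcongr
      _ = n ^ N * Real.exp (-(L * (p * δ - δ ^ 2 / 2))) := by
        rw [mul_pow, ← pow_mul, ← Real.exp_nat_mul]
        conv_rhs => rw [← hLr, pow_add, mul_comm L r]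
        rw [mul_neg, mul_comm r L]; ring
  have h8 := h5.trans (h1.trans h7)
  rw [← le_div_iff₀ (Real.exp_pos _), mul_div_assoc, ← Real.exp_sub] at h8
  refine h8.trans (mul_le_mul_of_nonneg_left (Real.exp_le_exp.2 ?_) (by positivity))
  have : 0 ≤ (L:ℝ) * ((1 - p) * δ ^ 2) := by
    have : 0 ≤ 1 - p := by linarith
    positivity
  nlinarith

/-! ### Weightings with prescribed marginals -/

/-- If at most a fraction `1/(16(m+1))` of the maps `f` with `f i = v` lie outside `G`, then every
load `w` on the vertices within `1/(16(m+1))` below `1` is realised exactly by a bounded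
weighting `z` of the maps in `G`, where `f` loads `v` once for every coordinate equal to `v`. -/
lemma exists_weights {V : Type*} [Fintype V] [DecidableEq V] (hV : 0 < Fintype.card V) (m : ℕ)
    (G : Finset (Fin (m + 1) → V))
    (hG : ∀ i v, ((univ.filter fun f : Fin (m + 1) → V => f ∉ G ∧ f i = v).card : ℝ)
      ≤ (Fintype.card V : ℝ) ^ m / (16 * (m + 1)))
    (w : V → ℝ) (hw1 : ∀ v, 1 - 1 / (16 * (m + 1)) ≤ w v) (hw2 : ∀ v, w v ≤ 1) :
    ∃ z : (Fin (m + 1) → V) → ℝ, (∀ f, 0 ≤ z f ∧ z f ≤ 4 / (Fintype.card V : ℝ) ^ m) ∧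
      (∀ f, f ∉ G → z f = 0) ∧
      ∀ v, ∑ f, z f * ∑ i, (if f i = v then (1 : ℝ) else 0) = w v := by
  classical
  obtain ⟨n, hn⟩ : ∃ n : ℝ, n = (Fintype.card V : ℝ) := ⟨_, rfl⟩
  rw [← hn] at hG ⊢
  have hn0 : 0 < n := by rw [hn]; exact_mod_cast hV
  obtain ⟨M, hM⟩ : ∃ M : ℝ, M = (m : ℝ) + 1 := ⟨_, rfl⟩
  rw [← hM] at hG hw1
  have hM1 : 1 ≤ M := by rw [hM]; linarith [(Nat.cast_nonneg m : (0:ℝ) ≤ m)]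
  have hM0 : 0 < M := by linarith
  obtain ⟨Q, hQ⟩ : ∃ Q : ℝ, Q = n ^ m := ⟨_, rfl⟩
  rw [← hQ] at hG ⊢
  have hQ0 : 0 < Q := by rw [hQ]; positivity
  obtain ⟨ε, hε⟩ : ∃ ε : ℝ, ε = 1 / (16 * M) := ⟨_, rfl⟩
  rw [← hε] at hw1
  have hε0 : 0 < ε := by rw [hε]; positivity
  have hεM : ε * M = 1 / 16 := by rw [hε]; field_simp
  have hε1 : ε ≤ 1 / 16 := by nlinarith
  have hGe : ∀ i v, ((univ.filter fun f : Fin (m + 1) → V => f ∉ G ∧ f i = v).card : ℝ)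
      ≤ ε * Q := fun i v => (hG i v).trans (le_of_eq (by rw [hε]; field_simp))
  have hsplit : ∀ i v, ((univ.filter fun f : Fin (m + 1) → V => f ∈ G ∧ f i = v).card : ℝ)
      + ((univ.filter fun f : Fin (m + 1) → V => f ∉ G ∧ f i = v).card : ℝ) = Q := by
    intro i v
    have h1 := card_apply_eq (V := V) i v
    rw [← card_filter_add_card_filter_not (s := univ.filter fun f : Fin (m + 1) → V => f i = v)
      (fun f => f ∈ G), filter_filter, filter_filter] at h1
    simp only [Fintype.card_fin, Nat.add_sub_cancel] at h1
    rw [hQ, hn]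
    simp only [and_comm] at h1 ⊢
    exact_mod_cast h1
  let cnt : (Fin (m + 1) → V) → V → ℝ := fun f v => ∑ i, (if f i = v then (1 : ℝ) else 0)
  let s : V → ℝ := fun v => ∑ f ∈ G, cnt f v
  have hs : ∀ v, s v = ∑ i, ((univ.filter fun f : Fin (m + 1) → V => f ∈ G ∧ f i = v).card : ℝ) := by
    intro v
    simp only [s, cnt]
    rw [sum_comm]
    refine sum_congr rfl fun i _ => ?_
    rw [sum_boole]
    congr 2; ext f; simp
  have hs1 : ∀ v, M * Q * (1 - ε) ≤ s v := by
    intro v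
    rw [hs]
    have : ∑ i : Fin (m + 1), (Q * (1 - ε)) ≤
        ∑ i, ((univ.filter fun f : Fin (m + 1) → V => f ∈ G ∧ f i = v).card : ℝ) :=
      sum_le_sum fun i _ => by nlinarith [hsplit i v, hGe i v]
    refine le_trans (le_of_eq ?_) this
    simp [hM]; ring
  have hs2 : ∀ v, s v ≤ M * Q := by
    intro v
    rw [hs]
    have : ∑ i, ((univ.filter fun f : Fin (m + 1) → V => f ∈ G ∧ f i = v).card : ℝ)
        ≤ ∑ i : Fin (m + 1), Q :=
      sum_le_sum fun i _ => by
        have := hsplit i v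
        have h0 : (0:ℝ) ≤ ((univ.filter fun f : Fin (m + 1) → V => f ∉ G ∧ f i = v).card : ℝ) :=
          Nat.cast_nonneg _
        linarith
    refine this.trans (le_of_eq ?_)
    simp [hM]
  have hcard : ∀ c : ℝ, ∑ _v : V, c = n * c := fun c => by simp [hn]
  -- `s v` is the load at `v` of unit weights on `G`; the constant `a` below makes the total load of
  -- the weights `a` on `G` equal to the required total, so the errors `δ` sum to `0`.
  obtain ⟨σ, hσ⟩ : ∃ σ, σ = ∑ v, s v := ⟨_, rfl⟩
  obtain ⟨ω, hω⟩ : ∃ ω, ω = ∑ v, w v := ⟨_, rfl⟩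
  have hσ1 : n * (M * Q * (1 - ε)) ≤ σ := by
    rw [hσ, ← hcard]; exact sum_le_sum fun v _ => hs1 v
  have hσ2 : σ ≤ n * (M * Q) := by
    rw [hσ, ← hcard]; exact sum_le_sum fun v _ => hs2 v
  have hω1 : n * (1 - ε) ≤ ω := by
    rw [hω, ← hcard]; exact sum_le_sum fun v _ => hw1 v
  have hω2 : ω ≤ n * 1 := by
    rw [hω, ← hcard]; exact sum_le_sum fun v _ => hw2 v
  have hMQ : 0 < M * Q := by positivity
  have hσ0 : 0 < σ := lt_of_lt_of_le (by
    have : 0 < 1 - ε := by linarith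
    positivity) hσ1
  obtain ⟨a, ha⟩ : ∃ a, a = ω / σ := ⟨_, rfl⟩
  have haσ : a * σ = ω := by rw [ha]; field_simp
  have ha0 : 0 ≤ a := by
    rw [ha]; refine div_nonneg (le_trans ?_ hω1) hσ0.le
    have : 0 ≤ 1 - ε := by linarith
    positivity
  have ha1 : 1 - ε ≤ a * (M * Q) := by
    have h1 : a * σ ≤ a * (n * (M * Q)) := mul_le_mul_of_nonneg_left hσ2 ha0
    have h2 : n * (1 - ε) ≤ n * (a * (M * Q)) := by nlinarith
    exact le_of_mul_le_mul_left h2 hn0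
  have ha2 : a * (M * Q) * (1 - ε) ≤ 1 := by
    have h1 : a * (n * (M * Q * (1 - ε))) ≤ a * σ := mul_le_mul_of_nonneg_left hσ1 ha0
    have h2 : n * (a * (M * Q) * (1 - ε)) ≤ n * 1 := by nlinarith
    exact le_of_mul_le_mul_left h2 hn0
  have ha3 : a * (M * Q) ≤ 1 + 2 * ε := by nlinarith
  let δ : V → ℝ := fun v => w v - a * s v
  have hδ : ∀ v, |δ v| ≤ 3 * ε := by
    intro v
    have h1 : a * s v ≤ a * (M * Q) := mul_le_mul_of_nonneg_left (hs2 v) ha0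
    have h2 : a * (M * Q * (1 - ε)) ≤ a * s v := mul_le_mul_of_nonneg_left (hs1 v) ha0
    have h3 : (1 - ε) * (1 - ε) ≤ a * (M * Q) * (1 - ε) :=
      mul_le_mul_of_nonneg_right ha1 (by linarith)
    rw [abs_le]
    constructor
    · simp only [δ]; linarith [hw1 v]
    · simp only [δ]; nlinarith [hw2 v]
  have hδ0 : ∑ v, δ v = 0 := by
    simp only [δ]
    rw [sum_sub_distrib, ← mul_sum, ← hσ, ← hω, haσ, sub_self]
  -- `K v u` consists of the tails that extend into `G` both by `v` and by `u`; moving the weight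
  -- `c v u` from `cons u A` to `cons v A` for all `A ∈ K v u` transfers the load
  -- `(δ v - δ u) / n` from `u` to `v`. Summing over `u` adds exactly `δ v` to the load at `v`.
  let K : V → V → Finset (Fin m → V) := fun v u =>
    univ.filter fun A => (Fin.cons v A : Fin (m + 1) → V) ∈ G ∧ (Fin.cons u A : Fin (m + 1) → V) ∈ G
  have hKs : ∀ u v, K u v = K v u := fun u v => by
    ext A; simp only [K, mem_filter, and_comm]
  have hbad : ∀ v, ((univ.filter fun A : Fin m → V => (Fin.cons v A : Fin (m + 1) → V) ∉ G).card : ℝ)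
      ≤ ε * Q := by
    intro v
    refine le_trans ?_ (hGe 0 v)
    norm_cast
    refine card_le_card_of_injOn (fun A => (Fin.cons v A : Fin (m + 1) → V)) ?_ ?_
    · intro A hA
      simpa using hA
    · intro A _ B _ h
      exact Fin.cons_right_injective (α := fun _ => V) v h
  have hK : ∀ v u, (1 - 2 * ε) * Q ≤ (K v u).card := by
    intro v u
    have h1 : (univ : Finset (Fin m → V)) ⊆ K v u ∪
        ((univ.filter fun A : Fin m → V => (Fin.cons v A : Fin (m + 1) → V) ∉ G) ∪
        (univ.filter fun A : Fin m → V => (Fin.cons u A : Fin (m + 1) → V) ∉ G)) := by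
      intro A _
      simp only [K, mem_union, mem_filter, mem_univ, true_and]
      tauto
    have h2 := (card_le_card h1).trans ((card_union_le _ _).trans
      (Nat.add_le_add_left (card_union_le _ _) _))
    have h3 : (univ : Finset (Fin m → V)).card = Fintype.card V ^ m := by simp
    rw [h3] at h2
    have h4 : Q ≤ (K v u).card +
        (((univ.filter fun A : Fin m → V => (Fin.cons v A : Fin (m + 1) → V) ∉ G).card : ℝ) +
        ((univ.filter fun A : Fin m → V => (Fin.cons u A : Fin (m + 1) → V) ∉ G).card : ℝ)) := by
      rw [hQ, hn]; exact_mod_cast h2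
    nlinarith [hbad v, hbad u]
  have hK0 : ∀ v u, (0:ℝ) < (K v u).card := fun v u => lt_of_lt_of_le (by nlinarith) (hK v u)
  let c : V → V → ℝ := fun v u => (δ v - δ u) / (n * (K v u).card)
  have hcs : ∀ u v, c u v = - c v u := fun u v => by
    simp only [c, hKs u v]; ring
  let corr : (Fin (m + 1) → V) → ℝ := fun f =>
    ∑ u, if Fin.tail f ∈ K (f 0) u then c (f 0) u else 0
  have hcb : ∀ v u, |c v u| ≤ (1 / n) * (12 * ε / Q) := by
    intro v u
    simp only [c]
    rw [abs_div, abs_of_pos (mul_pos hn0 (hK0 v u)), div_mul_div_comm, one_mul]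
    have h1 : |δ v - δ u| ≤ 6 * ε := by
      have := abs_sub (δ v) (δ u); linarith [hδ v, hδ u]
    rw [div_le_div_iff₀ (mul_pos hn0 (hK0 v u)) (by positivity)]
    have h2 : Q / 2 ≤ (K v u).card := le_trans (by nlinarith) (hK v u)
    calc |δ v - δ u| * (n * Q) ≤ 6 * ε * (n * Q) := by gcongr
      _ = 12 * ε * (n * (Q / 2)) := by ring
      _ ≤ _ := by gcongr
  have hcorr : ∀ f, |corr f| ≤ 12 * ε / Q := by
    intro f
    refine (abs_sum_le_sum_abs _ _).trans ?_
    refine (sum_le_sum (g := fun _ => (1 / n) * (12 * ε / Q)) fun u _ => ?_).trans (le_of_eq ?_)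
    · split_ifs
      · exact hcb _ _
      · rw [abs_zero]; positivity
    · rw [hcard]; field_simp
  have hca : 12 * ε / Q ≤ a := by
    rw [div_le_iff₀ hQ0]
    have : M * (12 * ε) ≤ M * (a * Q) := by nlinarith
    exact le_of_mul_le_mul_left this hM0
  have haQ : 2 * a ≤ 4 / Q := by
    rw [le_div_iff₀ hQ0]
    have : a * Q ≤ a * (M * Q) := by nlinarith [mul_nonneg ha0 hQ0.le]
    linarith
  have hcons : ∀ f : Fin (m + 1) → V, Fin.cons (f 0) (Fin.tail f) = f := fun f =>
    Fin.cons_self_tail f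
  refine ⟨fun f => (if f ∈ G then a else 0) + corr f, ?_, ?_, ?_⟩
  · intro f
    have h1 := abs_le.1 (hcorr f)
    by_cases hf : f ∈ G
    · simp only [hf, if_true]; constructor <;> linarith
    · have : corr f = 0 := by
        refine sum_eq_zero fun u _ => if_neg fun h => ?_
        simp only [K, mem_filter, mem_univ, true_and, hcons] at h
        exact hf h.1
      simp only [hf, if_false, this, add_zero, le_refl, true_and]; positivity
  · intro f hf
    have : corr f = 0 := by
      refine sum_eq_zero fun u _ => if_neg fun h => ?_
      simp only [K, mem_filter, mem_univ, true_and, hcons] at h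
      exact hf h.1
    simp only [hf, if_false, this, add_zero]
  · intro x
    have hmain : ∑ f, (if f ∈ G then a else 0) * cnt f x = a * s x := by
      simp only [s, mul_sum, ite_mul, zero_mul]
      rw [sum_ite_mem, univ_inter]
    have hc : ∑ f, corr f * cnt f x = δ x := by
      have h1 : ∑ f, corr f * cnt f x = ∑ p : V × (Fin m → V),
          ∑ u, (if p.2 ∈ K p.1 u then c p.1 u else 0) *
            ((if p.1 = x then (1:ℝ) else 0) + ∑ i, if p.2 i = x then (1:ℝ) else 0) := by
        refine (Fintype.sum_equiv (Fin.consEquiv fun _ : Fin (m + 1) => V) _ _ fun p => ?_).symm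
        simp only [corr, cnt, Fin.consEquiv, Equiv.coe_fn_mk, Fin.tail_cons, Fin.cons_zero,
          Fin.sum_univ_succ, Fin.cons_succ, sum_mul]
      rw [h1, Fintype.sum_prod_type]
      have h2 : ∀ v, ∑ A : Fin m → V, ∑ u, (if A ∈ K v u then c v u else 0) *
            ((if v = x then (1:ℝ) else 0) + ∑ i, if A i = x then (1:ℝ) else 0)
          = ∑ u, (c v u * (K v u).card) * (if v = x then 1 else 0)
            + ∑ u, c v u * ∑ A ∈ K v u, ∑ i, (if A i = x then (1:ℝ) else 0) := by
        intro v
        rw [sum_comm, ← sum_add_distrib]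
        refine sum_congr rfl fun u _ => ?_
        simp only [ite_mul, zero_mul]
        rw [sum_ite_mem, univ_inter, ← mul_sum, sum_add_distrib, sum_const, nsmul_eq_mul]
        ring
      simp only [h2]
      rw [sum_add_distrib]
      -- The later coordinates contribute nothing, as `c` is antisymmetric and `K` symmetric.
      have h3 : ∑ v, ∑ u, c v u * ∑ A ∈ K v u, ∑ i, (if A i = x then (1:ℝ) else 0) = 0 := by
        have : ∑ v, ∑ u, c v u * ∑ A ∈ K v u, ∑ i, (if A i = x then (1:ℝ) else 0)
            = - ∑ v, ∑ u, c v u * ∑ A ∈ K v u, ∑ i, (if A i = x then (1:ℝ) else 0) := by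
          conv_lhs => rw [sum_comm]
          rw [← sum_neg_distrib]
          refine sum_congr rfl fun v _ => ?_
          rw [← sum_neg_distrib]
          refine sum_congr rfl fun u _ => ?_
          rw [hcs u v, hKs u v]; ring
        linarith
      rw [h3, add_zero]
      have h4 : ∀ v u, c v u * (K v u).card = (1 / n) * (δ v - δ u) := fun v u => by
        have := (hK0 v u).ne'
        simp only [c]; field_simp
      simp only [h4, mul_ite, mul_one, mul_zero]
      rw [sum_comm]
      simp only [sum_ite_eq', mem_univ, if_true]
      rw [← mul_sum, sum_sub_distrib, hδ0, hcard]
      field_simp; ring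
    have : ∀ f, ((if f ∈ G then a else 0) + corr f) * ∑ i, (if f i = x then (1 : ℝ) else 0)
        = (if f ∈ G then a else 0) * cnt f x + corr f * cnt f x := fun f => add_mul _ _ _
    simp only [this]
    rw [sum_add_distrib, hmain, hc]
    simp only [δ]; ring

/-! ### Superposing matchings of pulled back hypergraphs -/

/-- The `k`-uniform hypergraph on the sample points `Fin M` whose edges are the `k`-sets mapped by `f`
onto an edge of `E`. For `k`-uniform `E`, the map `f` is then injective on each edge. -/
def pullback {n M : ℕ} (k : ℕ) (E : Finset (Finset (Fin n))) (f : Fin M → Fin n) :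
    Finset (Finset (Fin M)) :=
  univ.filter fun A => A.card = k ∧ A.image f ∈ E

lemma card_edges_at {n k : ℕ} (E : Finset (Finset (Fin n))) (hE : ∀ e ∈ E, e.card = k)
    (v : Fin n) : (E.filter fun e => v ∈ e).card ≤ n ^ (k - 1) := by
  have h : (E.filter fun e => v ∈ e).card ≤ (powersetCard (k - 1) (univ : Finset (Fin n))).card := by
    refine card_le_card_of_injOn (fun e => e.erase v) ?_ ?_
    · intro e he
      simp only [coe_filter, Set.mem_ofPred_eq] at he
      simp [mem_powersetCard, card_erase_of_mem he.2, hE e he.1]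
    · intro e he e' he' h
      simp only [coe_filter, Set.mem_ofPred_eq] at he he'
      rw [← insert_erase he.2, ← insert_erase he'.2]
      simp only at h
      rw [h]
  refine h.trans ?_
  rw [card_powersetCard]
  simpa using Nat.choose_le_pow n (k - 1)

/-- Superposition of the perfect matchings of the pullbacks along the maps in `G`, weighted so that
adding the same small constant to all edges gives total weight `1` at each vertex. -/
lemma fpm_of_good {n k m : ℕ} (hn : 0 < n) (hk : 0 < k) (hkm : k ≤ m + 1)
    (E : Finset (Finset (Fin n))) (hE : ∀ e ∈ E, e.card = k)
    (G : Finset (Fin (m + 1) → Fin n))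
    (hG : ∀ i v, ((univ.filter fun f : Fin (m + 1) → Fin n => f ∉ G ∧ f i = v).card : ℝ)
      ≤ (n : ℝ) ^ m / (16 * (m + 1)))
    (hPM : ∀ f ∈ G, ∃ M, IsPM (pullback k E f) M) (C : ℝ) (hC1 : 16 * (m + 1) ≤ C)
    (hC2 : 4 * (2 ^ (m + 1) * (k : ℝ) ^ k) + 1 ≤ C) :
    ∃ x : Finset (Fin n) → ℝ, IsFPM E x ∧
      ∀ e ∈ E, 1 / (C * (n : ℝ) ^ (k - 1)) ≤ x e ∧ x e ≤ C / (n : ℝ) ^ (k - 1) := by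
  classical
  have hn0 : (0:ℝ) < n := by exact_mod_cast hn
  obtain ⟨ε, hε⟩ : ∃ ε : ℝ, ε = 1 / (16 * (m + 1)) := ⟨_, rfl⟩
  have hε0 : 0 < ε := by rw [hε]; positivity
  have hε1 : ε ≤ 1 := by
    rw [hε, div_le_one (by positivity)]
    linarith [(Nat.cast_nonneg m : (0:ℝ) ≤ m)]
  obtain ⟨q, hq⟩ : ∃ q : ℝ, q = (n:ℝ) ^ (k - 1) := ⟨_, rfl⟩
  have hq0 : 0 < q := by rw [hq]; positivity
  rw [← hq]
  have hdeg : ∀ v, ((E.filter fun e => v ∈ e).card : ℝ) ≤ q := fun v => by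
    rw [hq]; exact_mod_cast card_edges_at E hE v
  have hcd : ∀ v, ε / q * ((E.filter fun e => v ∈ e).card : ℝ) ≤ ε := fun v => by
    rw [div_mul_eq_mul_div, div_le_iff₀ hq0]
    exact mul_le_mul_of_nonneg_left (hdeg v) hε0.le
  obtain ⟨z, hz1, hz2, hz3⟩ := exists_weights (V := Fin n) (by simpa using hn) m G
    (by simpa using hG) (fun v => 1 - ε / q * ((E.filter fun e => v ∈ e).card : ℝ))
    (fun v => by rw [← hε]; linarith [hcd v])
    (fun v => by
      have : 0 ≤ ε / q * ((E.filter fun e => v ∈ e).card : ℝ) := by positivity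
      linarith)
  rw [Fintype.card_fin] at hz1
  have hex : ∀ f, ∃ M, f ∈ G → IsPM (pullback k E f) M := fun f => by
    by_cases hf : f ∈ G
    · obtain ⟨M, hM⟩ := hPM f hf
      exact ⟨M, fun _ => hM⟩
    · exact ⟨∅, fun h => absurd h hf⟩
  choose Mt hMt using hex
  let y : Finset (Fin n) → ℝ := fun e => ∑ f, z f * ((Mt f).filter fun A => A.image f = e).card
  have hy0 : ∀ e, 0 ≤ y e := fun e => sum_nonneg fun f _ => mul_nonneg (hz1 f).1 (Nat.cast_nonneg _)
  let x : Finset (Fin n) → ℝ := fun e => if e ∈ E then ε / q + y e else 0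
  have hx0 : ∀ e, 0 ≤ x e := fun e => by
    simp only [x]; split_ifs
    · have := hy0 e; positivity
    · exact le_rfl
  -- The perfect matching of the pullback covers each sample point once, and `f` is injective on its
  -- edges, so the image edges cover `v` as often as `f` takes the value `v`.
  have hcov : ∀ f ∈ G, ∀ v, ∑ e ∈ E.filter (fun e => v ∈ e),
      (((Mt f).filter fun A => A.image f = e).card : ℝ) = ∑ i, if f i = v then (1:ℝ) else 0 := by
    intro f hf v
    obtain ⟨hsub, hdisj, hcover⟩ := hMt f hf
    have h1 : ∑ e ∈ E.filter (fun e => v ∈ e), ((Mt f).filter fun A => A.image f = e).card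
        = ((Mt f).filter fun A => v ∈ A.image f).card := by
      rw [card_eq_sum_card_fiberwise (s := (Mt f).filter fun A => v ∈ A.image f)
        (f := fun A => A.image f) (t := E.filter fun e => v ∈ e)]
      · refine sum_congr rfl fun e he => ?_
        rw [filter_filter]
        congr 1; ext A
        simp only [mem_filter] at he ⊢
        constructor
        · rintro ⟨h, rfl⟩; exact ⟨h, he.2, rfl⟩
        · rintro ⟨h, _, h'⟩; exact ⟨h, h'⟩
      · intro A hA
        have hA := mem_filter.1 hA
        have := mem_filter.1 (hsub hA.1)
        exact mem_filter.2 ⟨this.2.2, hA.2⟩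
    have h2 : (univ.filter fun i => f i = v).card = ((Mt f).filter fun A => v ∈ A.image f).card := by
      have hch : ∀ i, ∃ A ∈ Mt f, i ∈ A := hcover
      choose φ hφ1 hφ2 using hch
      refine card_bij (fun i _ => φ i) ?_ ?_ ?_
      · intro i hi
        exact mem_filter.2 ⟨hφ1 i, mem_image.2 ⟨i, hφ2 i, (mem_filter.1 hi).2⟩⟩
      · intro i hi j hj hij
        have hA := (mem_filter.1 (hsub (hφ1 i))).2
        have hinj : Set.InjOn f (φ i) := by
          rw [← card_image_iff, hA.1]; exact hE _ hA.2
        exact hinj (hφ2 i) (by rw [hij]; exact hφ2 j)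
          ((mem_filter.1 hi).2.trans (mem_filter.1 hj).2.symm)
      · intro A hA
        obtain ⟨hA1, hA2⟩ := mem_filter.1 hA
        obtain ⟨i, hi, hiv⟩ := mem_image.1 hA2
        refine ⟨i, by simpa using hiv, ?_⟩
        by_contra hne
        exact (disjoint_left.1 (hdisj _ (hφ1 i) _ hA1 hne)) (hφ2 i) hi
    rw [sum_boole, h2, ← h1]; push_cast; rfl
  have hsum : ∀ v, ∑ e ∈ E.filter (fun e => v ∈ e), x e = 1 := by
    intro v
    have h1 : ∑ e ∈ E.filter (fun e => v ∈ e), x e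
        = ∑ e ∈ E.filter (fun e => v ∈ e), (ε / q + y e) :=
      sum_congr rfl fun e he => if_pos (mem_filter.1 he).1
    have h2 : ∑ e ∈ E.filter (fun e => v ∈ e), y e
        = ∑ f, z f * ∑ i, if f i = v then (1:ℝ) else 0 := by
      simp only [y]
      rw [sum_comm]
      refine sum_congr rfl fun f _ => ?_
      rw [← mul_sum]
      by_cases hf : f ∈ G
      · rw [hcov f hf v]
      · rw [hz2 f hf, zero_mul, zero_mul]
    rw [h1, sum_add_distrib, h2, hz3 v, sum_const, nsmul_eq_mul]
    ring
  have hy1 : ∀ e ∈ E, y e ≤ 4 * (2 ^ (m + 1) * (k:ℝ) ^ k) / q := by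
    intro e he
    have h1 : ∀ f ∈ G, (((Mt f).filter fun A => A.image f = e).card : ℝ)
        ≤ ∑ A ∈ powersetCard k (univ : Finset (Fin (m + 1))),
          if (∀ i ∈ A, f i ∈ e) then (1:ℝ) else 0 := by
      intro f hf
      rw [sum_boole]
      norm_cast
      refine card_le_card fun A hA => ?_
      obtain ⟨hA1, hA2⟩ := mem_filter.1 hA
      have hA := (mem_filter.1 ((hMt f hf).1 hA1)).2
      refine mem_filter.2 ⟨mem_powersetCard.2 ⟨subset_univ _, hA.1⟩, fun i hi => ?_⟩
      rw [← hA2]; exact mem_image_of_mem f hi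
    have h2 : y e ≤ ∑ f : Fin (m + 1) → Fin n, 4 / (n:ℝ) ^ m *
        ∑ A ∈ powersetCard k (univ : Finset (Fin (m + 1))),
          if (∀ i ∈ A, f i ∈ e) then (1:ℝ) else 0 := by
      refine sum_le_sum fun f _ => ?_
      by_cases hf : f ∈ G
      · exact mul_le_mul (hz1 f).2 (h1 f hf) (Nat.cast_nonneg _) (by positivity)
      · rw [hz2 f hf, zero_mul]
        exact mul_nonneg (by positivity) (sum_nonneg fun A _ => by split_ifs <;> norm_num)
    refine h2.trans ?_
    rw [← mul_sum, sum_comm]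
    have h3 : ∀ A ∈ powersetCard k (univ : Finset (Fin (m + 1))),
        ∑ f : Fin (m + 1) → Fin n, (if (∀ i ∈ A, f i ∈ e) then (1:ℝ) else 0)
        = (k:ℝ) ^ k * (n:ℝ) ^ (m + 1 - k) := by
      intro A hA
      have h0 := card_forall_mem (V := Fin n) A e
      rw [hE e he, (mem_powersetCard.1 hA).2, Fintype.card_fin, Fintype.card_fin] at h0
      have h0' := congrArg (Nat.cast : ℕ → ℝ) h0
      push_cast at h0'
      rw [sum_boole, ← h0']
      congr!
    rw [sum_congr rfl h3, sum_const, card_powersetCard, nsmul_eq_mul, card_univ, Fintype.card_fin]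
    have h4 : ((m + 1).choose k : ℝ) ≤ 2 ^ (m + 1) := by
      exact_mod_cast Nat.choose_le_two_pow (m + 1) k
    have h5 : (n:ℝ) ^ m = n ^ (m + 1 - k) * q := by
      rw [hq, ← pow_add]; congr 1; omega
    rw [h5]
    calc 4 / ((n:ℝ) ^ (m + 1 - k) * q) * (((m + 1).choose k : ℝ) * ((k:ℝ) ^ k * (n:ℝ) ^ (m + 1 - k)))
        ≤ 4 / ((n:ℝ) ^ (m + 1 - k) * q) * (2 ^ (m + 1) * ((k:ℝ) ^ k * (n:ℝ) ^ (m + 1 - k))) := by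
          gcongr
      _ = _ := by field_simp
  refine ⟨x, ⟨fun e => ⟨hx0 e, ?_⟩, fun e he => if_neg he, hsum⟩, fun e he => ?_⟩
  · by_cases he : e ∈ E
    · obtain ⟨v, hv⟩ : e.Nonempty := by rw [← card_pos, hE e he]; exact hk
      rw [← hsum v]
      exact single_le_sum (f := x) (fun e _ => hx0 e) (mem_filter.2 ⟨he, hv⟩)
    · simp [x, he]
  · have hxe : x e = ε / q + y e := if_pos he
    rw [hxe]
    constructor
    · have : 1 / (C * q) ≤ ε / q := by
        rw [hε, div_div]
        gcongr
      linarith [hy0 e]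
    · have h1 := hy1 e he
      have h2 : ε / q ≤ 1 / q := by gcongr
      have h3 : (4 * (2 ^ (m + 1) * (k:ℝ) ^ k) + 1) / q ≤ C / q := by gcongr
      rw [add_div] at h3
      linarith

/-! ### Most maps pull back to hypergraphs with a perfect matching -/

/-- For a fixed `d`-set `S` of sample points, few injective maps with `f i = v` give `S` a low degree
in the pullback. Conditioning on the values of `f` on `S ∪ {i}`, the degree of `S` is at least the
`liftDeg` of the link of the image of `S`, which is controlled by `card_low_liftDeg`. -/
lemma low_degree_card {n k d M : ℕ} (hdk : d < k) (hn : 0 < n)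
    (E : Finset (Finset (Fin n))) (hE : ∀ e ∈ E, e.card = k) (Δ D : ℕ)
    (hΔ : ∀ S : Finset (Fin n), S.card = d → Δ ≤ degS E S)
    (p δ : ℝ) (hδ : 0 ≤ δ) (hδp : δ ≤ p)
    (hp : p * (n : ℝ) ^ (k - d) ≤ (k - d).factorial * Δ)
    (hD : (D : ℝ) ≤ (p - δ) * (M - d - 1).choose (k - d))
    (i : Fin M) (v : Fin n) (S : Finset (Fin M)) (hS : S.card = d) :
    ((univ.filter fun f : Fin M → Fin n =>
        f i = v ∧ Function.Injective f ∧ degS (pullback k E f) S < D).card : ℝ)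
      ≤ (n : ℝ) ^ (M - 1) * Real.exp (-(((M - d - 1) / (k - d) : ℕ) * δ ^ 2 / 2)) := by
  classical
  obtain ⟨r, hr⟩ : ∃ r, r = k - d := ⟨_, rfl⟩
  rw [← hr] at hp hD ⊢
  -- Condition on `f` restricted to `S'`; the other coordinates remain uniform and independent.
  let S' := insert i S
  have hS'1 : S'.card ≤ d + 1 := by rw [← hS]; exact card_insert_le _ _
  have hS'0 : 1 ≤ S'.card := card_pos.2 ⟨i, mem_insert_self _ _⟩
  have hS'M : S'.card ≤ M := by simpa using card_le_univ S'
  have hcW : Fintype.card {x // x ∉ S'} = M - S'.card := by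
    simp [Fintype.card_subtype_compl]
  obtain ⟨η, hη⟩ : ∃ η, η = Real.exp (-(((M - d - 1) / r : ℕ) * δ ^ 2 / 2)) := ⟨_, rfl⟩
  rw [← hη]
  let ρ : (Fin M → Fin n) → ({x // x ∈ S'} → Fin n) := fun f j => f j
  let i' : {x // x ∈ S'} := ⟨i, mem_insert_self _ _⟩
  let F := univ.filter fun f : Fin M → Fin n =>
        f i = v ∧ Function.Injective f ∧ degS (pullback k E f) S < D
  have hfib : ∀ g, ((F.filter fun f => ρ f = g).card : ℝ) ≤ (n:ℝ) ^ (M - S'.card) * η := by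
    intro g
    rcases (F.filter fun f => ρ f = g).eq_empty_or_nonempty with h0 | ⟨f₀, hf₀⟩
    · rw [h0, hη]; simp; positivity
    obtain ⟨hf₀F, hf₀g⟩ := mem_filter.1 hf₀
    have hf₀F := (mem_filter.1 hf₀F).2
    let S₀ := S.image f₀
    have hS₀ : S₀.card = d := by rw [card_image_of_injective _ hf₀F.2.1, hS]
    let P : Finset (Finset (Fin n)) := (E.filter fun e => S₀ ⊆ e).image fun e => e \ S₀
    have hPr : ∀ T ∈ P, T.card = r := by
      intro T hT
      obtain ⟨e, he, rfl⟩ := mem_image.1 hT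
      obtain ⟨he1, he2⟩ := mem_filter.1 he
      rw [card_sdiff_of_subset he2, hS₀, hE e he1, hr]
    have hPc : Δ ≤ P.card := by
      refine (hΔ S₀ hS₀).trans (le_of_eq ?_)
      rw [card_image_of_injOn]; · rfl
      intro e he e' he' h
      have he := (mem_filter.1 (mem_coe.1 he)).2
      have he' := (mem_filter.1 (mem_coe.1 he')).2
      simp only at h
      rw [← sdiff_union_of_subset he, ← sdiff_union_of_subset he', h]
    have hlow := card_low_liftDeg (W := {x // x ∉ S'}) P hPr p δ (hδ.trans hδp) hδ
      (by simpa using hn) (by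
        rw [Fintype.card_fin]
        refine hp.trans ?_
        have : (Δ:ℝ) ≤ P.card := by exact_mod_cast hPc
        gcongr)
    rw [Fintype.card_fin, hcW] at hlow
    have hinj : (F.filter fun f => ρ f = g).card ≤ (univ.filter fun h : {x // x ∉ S'} → Fin n =>
        (liftDeg r P h : ℝ) < (p - δ) * (M - S'.card).choose r).card := by
      refine card_le_card_of_injOn (fun f j => f j) ?_ ?_
      · intro f hf
        obtain ⟨hfF, hfg⟩ := mem_filter.1 (mem_coe.1 hf)
        have hfF := (mem_filter.1 hfF).2
        have hSf : S.image f = S₀ := by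
          refine image_congr fun j hj => ?_
          exact congrFun (hfg.trans hf₀g.symm) ⟨j, mem_insert_of_mem hj⟩
        have hle : liftDeg r P (fun j : {x // x ∉ S'} => f j) ≤ degS (pullback k E f) S := by
          refine card_le_card_of_injOn (fun T => S ∪ T.map (Function.Embedding.subtype _)) ?_ ?_
          · intro T hT
            obtain ⟨hT1, hT2⟩ := mem_filter.1 (mem_coe.1 hT)
            obtain ⟨e, he, heT⟩ := mem_image.1 hT2
            obtain ⟨he1, he2⟩ := mem_filter.1 he
            have hdis : Disjoint S (T.map (Function.Embedding.subtype _)) := by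
              rw [disjoint_left]
              intro a ha haT
              obtain ⟨b, _, rfl⟩ := mem_map.1 haT
              exact b.2 (mem_insert_of_mem ha)
            refine mem_coe.2 (mem_filter.2 ⟨mem_filter.2 ⟨mem_univ _, ?_, ?_⟩, subset_union_left⟩)
            · rw [card_union_of_disjoint hdis, card_map, hS, (mem_powersetCard.1 hT1).2]; omega
            · have : (S ∪ T.map (Function.Embedding.subtype _)).image f = e := by
                rw [image_union, hSf, map_eq_image, image_image]
                change S₀ ∪ T.image (fun j : {x // x ∉ S'} => f j) = e
                rw [← heT, union_sdiff_of_subset he2]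
              rw [this]; exact he1
          · intro T hT T' hT' h
            have hsub : ∀ T T' : Finset {x // x ∉ S'},
                S ∪ T.map (Function.Embedding.subtype _) = S ∪ T'.map (Function.Embedding.subtype _)
                → T ⊆ T' := by
              intro T T' h a ha
              have h1 : (a : Fin M) ∈ S ∪ T'.map (Function.Embedding.subtype _) := by
                rw [← h]
                exact mem_union_right _ (mem_map.2 ⟨a, ha, rfl⟩)
              rcases mem_union.1 h1 with h2 | h2
              · exact absurd (mem_insert_of_mem h2) a.2
              · obtain ⟨b, hb, hba⟩ := mem_map.1 h2
                have : b = a := Subtype.ext hba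
                exact this ▸ hb
            exact (hsub T T' h).antisymm (hsub T' T h.symm)
        refine mem_coe.2 (mem_filter.2 ⟨mem_univ _, ?_⟩)
        have h1 : (liftDeg r P (fun j : {x // x ∉ S'} => f j) : ℝ) < D := by
          exact_mod_cast hle.trans_lt hfF.2.2
        have h2 : ((M - d - 1).choose r : ℝ) ≤ (M - S'.card).choose r := by
          exact_mod_cast Nat.choose_le_choose r (by omega)
        have h3 : (p - δ) * ((M - d - 1).choose r : ℝ) ≤ (p - δ) * (M - S'.card).choose r :=
          mul_le_mul_of_nonneg_left h2 (by linarith)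
        linarith
      · intro f hf f' hf' h
        have hfg := (mem_filter.1 (mem_coe.1 hf)).2
        have hfg' := (mem_filter.1 (mem_coe.1 hf')).2
        funext j
        by_cases hj : j ∈ S'
        · exact congrFun (hfg.trans hfg'.symm) ⟨j, hj⟩
        · exact congrFun h ⟨j, hj⟩
    have h4 : Real.exp (-(((M - S'.card) / r : ℕ) * δ ^ 2 / 2)) ≤ η := by
      rw [hη, Real.exp_le_exp]
      have : (((M - d - 1) / r : ℕ) : ℝ) ≤ ((M - S'.card) / r : ℕ) := by
        exact_mod_cast Nat.div_le_div_right (by omega)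
      have := mul_le_mul_of_nonneg_right this (sq_nonneg δ)
      linarith
    calc ((F.filter fun f => ρ f = g).card : ℝ) ≤ _ := by exact_mod_cast hinj
      _ ≤ _ := hlow
      _ ≤ _ := by gcongr
  have hmaps : ∀ f ∈ F, ρ f ∈ univ.filter fun g : {x // x ∈ S'} → Fin n => g i' = v := by
    intro f hf
    exact mem_filter.2 ⟨mem_univ _, (mem_filter.1 hf).2.1⟩
  have htot := card_eq_sum_card_fiberwise (f := ρ) (s := F) hmaps
  change ((F.card : ℕ) : ℝ) ≤ _
  rw [htot]
  push_cast
  refine (sum_le_sum fun g _ => hfib g).trans ?_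
  rw [sum_const, card_apply_eq, nsmul_eq_mul]
  have hcU : Fintype.card {x // x ∈ S'} = S'.card := by simp
  rw [hcU, Fintype.card_fin]
  push_cast
  rw [← mul_assoc, ← pow_add]
  have : S'.card - 1 + (M - S'.card) = M - 1 := by omega
  rw [this]

/-- Union bound: the maps with `f i = v` that are not injective, or that pull some `d`-set back to
one of low degree, form a fraction of at most `1/(16(m+1))`. -/
lemma bad_card {n k d m : ℕ} (hdk : d < k) (hn : 0 < n)
    (E : Finset (Finset (Fin n))) (hE : ∀ e ∈ E, e.card = k) (Δ D : ℕ)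
    (hΔ : ∀ S : Finset (Fin n), S.card = d → Δ ≤ degS E S)
    (p δ : ℝ) (hδ : 0 ≤ δ) (hδp : δ ≤ p)
    (hp : p * (n : ℝ) ^ (k - d) ≤ (k - d).factorial * Δ)
    (hD : (D : ℝ) ≤ (p - δ) * (m + 1 - d - 1).choose (k - d))
    (hexp : ((m : ℝ) + 1) ^ d * Real.exp (-(((m + 1 - d - 1) / (k - d) : ℕ) * δ ^ 2 / 2))
      ≤ 1 / (32 * (m + 1)))
    (hnm : 32 * ((m : ℝ) + 1) ^ 3 ≤ n)
    (i : Fin (m + 1)) (v : Fin n) (G : Finset (Fin (m + 1) → Fin n))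
    (hG : ∀ f, Function.Injective f →
      (∀ S : Finset (Fin (m + 1)), S.card = d → D ≤ degS (pullback k E f) S) → f ∈ G) :
    ((univ.filter fun f : Fin (m + 1) → Fin n => f ∉ G ∧ f i = v).card : ℝ)
      ≤ (n : ℝ) ^ m / (16 * (m + 1)) := by
  classical
  have hn0 : (0:ℝ) < n := by exact_mod_cast hn
  obtain ⟨η, hη⟩ : ∃ η, η = Real.exp (-(((m + 1 - d - 1) / (k - d) : ℕ) * δ ^ 2 / 2)) := ⟨_, rfl⟩
  rw [← hη] at hexp
  let pairs := (univ : Finset (Fin (m + 1) × Fin (m + 1))).filter fun q => q.1 ≠ q.2 ∧ q.2 ≠ i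
  let A : Fin (m + 1) × Fin (m + 1) → Finset (Fin (m + 1) → Fin n) := fun q =>
    univ.filter fun f => f i = v ∧ f q.1 = f q.2
  let B : Finset (Fin (m + 1)) → Finset (Fin (m + 1) → Fin n) := fun S =>
    univ.filter fun f => f i = v ∧ Function.Injective f ∧ degS (pullback k E f) S < D
  have hsub : (univ.filter fun f : Fin (m + 1) → Fin n => f ∉ G ∧ f i = v)
      ⊆ pairs.biUnion A ∪ (powersetCard d univ).biUnion B := by
    intro f hf
    obtain ⟨hfG, hfi⟩ := (mem_filter.1 hf).2
    rw [mem_union, mem_biUnion, mem_biUnion]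
    by_cases hinj : Function.Injective f
    · right
      have : ∃ S : Finset (Fin (m + 1)), S.card = d ∧ degS (pullback k E f) S < D := by
        by_contra! h
        exact hfG (hG f hinj h)
      obtain ⟨S, hS, hSD⟩ := this
      exact ⟨S, mem_powersetCard.2 ⟨subset_univ _, hS⟩,
        mem_filter.2 ⟨mem_univ _, hfi, hinj, hSD⟩⟩
    · left
      obtain ⟨a, b, hab, hne⟩ : ∃ a b, f a = f b ∧ a ≠ b := by
        simpa [Function.Injective] using hinj
      by_cases hb : b = i
      · refine ⟨(b, a), mem_filter.2 ⟨mem_univ _, hne.symm, ?_⟩,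
          mem_filter.2 ⟨mem_univ _, hfi, hab.symm⟩⟩
        simpa [← hb] using hne
      · exact ⟨(a, b), mem_filter.2 ⟨mem_univ _, hne, hb⟩, mem_filter.2 ⟨mem_univ _, hfi, hab⟩⟩
  have hA : ∀ q ∈ pairs, ((A q).card : ℝ) ≤ (n:ℝ) ^ m / n := by
    intro q hq
    have hq := (mem_filter.1 hq).2
    have := card_coincide (V := Fin n) i q.1 q.2 v hq.1 hq.2
    simp only [Fintype.card_fin, Nat.add_sub_cancel] at this
    rw [le_div_iff₀ hn0, mul_comm]
    exact_mod_cast this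
  have hB : ∀ S ∈ powersetCard d (univ : Finset (Fin (m + 1))), ((B S).card : ℝ) ≤ (n:ℝ) ^ m * η := by
    intro S hS
    have := low_degree_card hdk hn E hE Δ D hΔ p δ hδ hδp hp hD i v S (mem_powersetCard.1 hS).2
    rw [hη]
    exact this
  have h1 : ((univ.filter fun f : Fin (m + 1) → Fin n => f ∉ G ∧ f i = v).card : ℝ)
      ≤ ∑ q ∈ pairs, ((A q).card : ℝ) + ∑ S ∈ powersetCard d univ, ((B S).card : ℝ) := by
    have := (card_le_card hsub).trans ((card_union_le _ _).trans
      (Nat.add_le_add card_biUnion_le card_biUnion_le))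
    exact_mod_cast this
  have h2 := sum_le_sum hA
  have h3 := sum_le_sum hB
  rw [sum_const, nsmul_eq_mul] at h2 h3
  have h4 : (pairs.card : ℝ) ≤ ((m:ℝ) + 1) ^ 2 := by
    have : pairs.card ≤ (m + 1) ^ 2 := (card_le_univ _).trans (by simp [sq])
    exact_mod_cast this
  have h5 : ((powersetCard d (univ : Finset (Fin (m + 1)))).card : ℝ) ≤ ((m:ℝ) + 1) ^ d := by
    rw [card_powersetCard, card_univ, Fintype.card_fin]
    exact_mod_cast Nat.choose_le_pow (m + 1) d
  have hη0 : 0 < η := by rw [hη]; positivity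
  have hnm0 : (0:ℝ) < (n:ℝ) ^ m := by positivity
  have h6 : (pairs.card : ℝ) * ((n:ℝ) ^ m / n) ≤ (n:ℝ) ^ m * (1 / (32 * (m + 1))) := by
    have : ((m:ℝ) + 1) ^ 2 / n ≤ 1 / (32 * (m + 1)) := by
      rw [div_le_div_iff₀ hn0 (by positivity)]; linarith
    calc (pairs.card : ℝ) * ((n:ℝ) ^ m / n) ≤ ((m:ℝ) + 1) ^ 2 * ((n:ℝ) ^ m / n) := by gcongr
      _ = (n:ℝ) ^ m * (((m:ℝ) + 1) ^ 2 / n) := by ring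
      _ ≤ _ := by gcongr
  have h7 : ((powersetCard d (univ : Finset (Fin (m + 1)))).card : ℝ) * ((n:ℝ) ^ m * η)
      ≤ (n:ℝ) ^ m * (1 / (32 * (m + 1))) := by
    calc _ ≤ ((m:ℝ) + 1) ^ d * ((n:ℝ) ^ m * η) := by gcongr
      _ = (n:ℝ) ^ m * (((m:ℝ) + 1) ^ d * η) := by ring
      _ ≤ _ := by gcongr
  have h8 : (n:ℝ) ^ m / (16 * (m + 1)) = (n:ℝ) ^ m * (1 / (32 * (m + 1)))
      + (n:ℝ) ^ m * (1 / (32 * (m + 1))) := by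
    field_simp; norm_num
  linarith

/-- The infimum in the definition of `mThreshold` is attained, as the defining set is nonempty:
a degree condition beyond the number of all vertex sets is never satisfied. -/
lemma mThreshold_spec {d k n : ℕ} (hdn : d ≤ n) (E : Finset (Finset (Fin n)))
    (hE : ∀ e ∈ E, e.card = k)
    (hdeg : ∀ S : Finset (Fin n), S.card = d → mThreshold d k n ≤ degS E S) :
    ∃ M, IsPM E M := by
  have hne : {D : ℕ | ∀ E : Finset (Finset (Fin n)), (∀ e ∈ E, e.card = k) →
    (∀ S : Finset (Fin n), S.card = d → D ≤ degS E S) → ∃ M, IsPM E M}.Nonempty := by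
    refine ⟨(univ : Finset (Finset (Fin n))).card + 1, fun E _ h => ?_⟩
    obtain ⟨S, _, hS⟩ := exists_subset_card_eq (s := (univ : Finset (Fin n))) (n := d) (by simpa)
    have h1 := h S hS
    have h2 : degS E S ≤ (univ : Finset (Finset (Fin n))).card := card_le_univ _
    omega
  exact Nat.sInf_mem hne E hE hdeg

lemma minDeg_le {n d : ℕ} (E : Finset (Finset (Fin n))) (S : Finset (Fin n)) (hS : S.card = d) :
    minDeg E d ≤ degS E S := Nat.sInf_le ⟨S, hS, rfl⟩

/-! ### Choice of the constants -/

/-- Choice of the sample size `m + 1`, a multiple of `k`: large enough that the threshold for perfect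
matchings is close to its limit and that the exponential tail beats the union bound. -/
lemma exists_sample_size (d k : ℕ) (hdk : d < k) (γ : ℝ) (hγ : 0 < γ) (α : ℝ)
    (hα0 : 0 ≤ α) (hα : IsDiracThreshold d k α) :
    ∃ m : ℕ, k ≤ m + 1 ∧
      (mThreshold d k (m + 1) : ℝ) ≤ (α + γ / 2) * (m + 1 - d - 1).choose (k - d) ∧
      ((m : ℝ) + 1) ^ d * Real.exp (-(((m + 1 - d - 1) / (k - d) : ℕ) * (γ / 4) ^ 2 / 2))
        ≤ 1 / (32 * (m + 1)) := by
  obtain ⟨r, hr⟩ : ∃ r, r = k - d := ⟨_, rfl⟩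
  have hr1 : 1 ≤ r := by omega
  have hr0 : (0:ℝ) < r := by exact_mod_cast hr1
  have hk0 : 0 < k := by omega
  have hkN : Filter.Tendsto (fun N : ℕ => ((k * N : ℕ) : ℝ)) Filter.atTop Filter.atTop :=
    tendsto_natCast_atTop_atTop.comp (Filter.tendsto_id.const_mul_atTop' hk0)
  have e1 : ∀ᶠ N : ℕ in Filter.atTop,
      (mThreshold d k (k * N) : ℝ) / ((k * N - d).choose (k - d) : ℝ) < α + γ / 4 :=
    hα.eventually_lt_const (by linarith)
  have e2 : ∀ᶠ N : ℕ in Filter.atTop, (4 * (α + γ / 2) * r / γ + d + k + 1 : ℝ) ≤ ((k * N : ℕ) : ℝ) :=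
    hkN.eventually_ge_atTop _
  let c : ℝ := (γ / 4) ^ 2 / (2 * r)
  have hc : 0 < c := by positivity
  let K : ℝ := Real.exp (c * (d + 1 + r))
  have hlim : Filter.Tendsto (fun x : ℝ => (c * x) ^ (d + 1) * Real.exp (-(c * x)))
      Filter.atTop (nhds 0) :=
    (Real.tendsto_pow_mul_exp_neg_atTop_nhds_zero (d + 1)).comp
      (Filter.tendsto_id.const_mul_atTop hc)
  have e3 : ∀ᶠ N : ℕ in Filter.atTop, (c * ((k * N : ℕ) : ℝ)) ^ (d + 1)
      * Real.exp (-(c * ((k * N : ℕ) : ℝ))) < c ^ (d + 1) / (32 * K) :=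
    (hlim.comp hkN).eventually_lt_const (by positivity)
  obtain ⟨N, h1, h2, h3⟩ := (e1.and (e2.and e3)).exists
  have hbig : (d + k + 1 : ℝ) ≤ ((k * N : ℕ) : ℝ) := by
    have : 0 ≤ 4 * (α + γ / 2) * r / γ := by positivity
    linarith
  have hbig' : d + k + 1 ≤ k * N := by exact_mod_cast hbig
  obtain ⟨m, hm⟩ : ∃ m, k * N = m + 1 := ⟨k * N - 1, by omega⟩
  rw [hm] at h1 h2 h3 hbig'
  rw [← hr] at h1 ⊢
  refine ⟨m, by omega, ?_, ?_⟩
  · have hpos : (0:ℝ) < (m + 1 - d).choose r := by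
      exact_mod_cast Nat.choose_pos (by omega)
    rw [div_lt_iff₀ hpos] at h1
    refine h1.le.trans ?_
    have hid := Nat.choose_mul_succ_eq (m + 1 - d - 1) r
    have hs : m + 1 - d - 1 + 1 = m + 1 - d := by omega
    rw [hs] at hid
    have hid' : ((m + 1 - d - 1).choose r : ℝ) * ((m:ℝ) + 1 - d)
        = (m + 1 - d).choose r * ((m:ℝ) + 1 - d - r) := by
      have h4 : ((m + 1 - d : ℕ) : ℝ) = (m:ℝ) + 1 - d := by
        rw [Nat.cast_sub (by omega)]; push_cast; ring
      have h5 : ((m + 1 - d - r : ℕ) : ℝ) = (m:ℝ) + 1 - d - r := by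
        rw [Nat.cast_sub (by omega), h4]
      rw [← h5, ← h4]; exact_mod_cast hid
    push_cast at h2
    have h6 : 4 * (α + γ / 2) * r / γ ≤ (m:ℝ) + 1 - d := by
      have : (0:ℝ) ≤ k := Nat.cast_nonneg k
      linarith
    rw [div_le_iff₀ hγ] at h6
    have hx : 0 < (m:ℝ) + 1 - d := by
      have : (d + k + 1 : ℝ) ≤ (m:ℝ) + 1 := by exact_mod_cast hbig'
      have : (0:ℝ) ≤ k := Nat.cast_nonneg k
      linarith
    have h7 : (α + γ / 4) * ((m:ℝ) + 1 - d) ≤ (α + γ / 2) * ((m:ℝ) + 1 - d - r) := by nlinarith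
    have h8 := mul_le_mul_of_nonneg_left h7 hpos.le
    refine le_of_mul_le_mul_right ?_ hx
    calc _ = ((m + 1 - d).choose r : ℝ) * ((α + γ / 4) * ((m:ℝ) + 1 - d)) := by ring
      _ ≤ _ := h8
      _ = (α + γ / 2) * (((m + 1 - d).choose r : ℝ) * ((m:ℝ) + 1 - d - r)) := by ring
      _ = _ := by rw [← hid']; ring
  · have hfl : (m + 1 - d - 1 : ℕ) < r * ((m + 1 - d - 1) / r + 1) := by
      rw [mul_comm]; exact Nat.lt_mul_of_div_lt (Nat.lt_succ_self _) (by omega)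
    have hfl' : (m:ℝ) - d ≤ r * ((((m + 1 - d - 1) / r : ℕ) : ℝ) + 1) := by
      have : ((m + 1 - d - 1 : ℕ) : ℝ) = (m:ℝ) - d := by
        have : m + 1 - d - 1 = m - d := by omega
        rw [this, Nat.cast_sub (by omega)]
      rw [← this]; exact_mod_cast hfl.le
    have hle : Real.exp (-(((m + 1 - d - 1) / r : ℕ) * (γ / 4) ^ 2 / 2))
        ≤ K * Real.exp (-(c * ((m:ℝ) + 1))) := by
      rw [← Real.exp_add, Real.exp_le_exp]
      have hcr : (γ / 4) ^ 2 / 2 = c * r := by simp only [c]; field_simp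
      rw [mul_div_assoc, hcr]
      have := mul_le_mul_of_nonneg_left hfl' hc.le
      nlinarith
    have hm0 : (0:ℝ) < (m:ℝ) + 1 := by positivity
    push_cast at h3
    rw [mul_pow, mul_assoc, lt_div_iff₀ (by positivity), mul_assoc] at h3
    have hK : 0 < K := Real.exp_pos _
    have h4 := lt_of_mul_lt_mul_left (h3.trans_le (mul_one _).ge) (by positivity)
    rw [le_div_iff₀ (by positivity)]
    calc _ ≤ ((m:ℝ) + 1) ^ d * (K * Real.exp (-(c * ((m:ℝ) + 1)))) * (32 * (m + 1)) := by gcongr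
      _ = ((m:ℝ) + 1) ^ (d + 1) * Real.exp (-(c * ((m:ℝ) + 1))) * (32 * K) := by ring
      _ ≤ 1 := by linarith

/-- The normalisation `C(n-d, k-d)` of degrees agrees with `n^(k-d) / (k-d)!` up to a factor tending
to `1`, which is absorbed into the loss from `γ` to `3γ/4`. -/
lemma choose_lower {d k n : ℕ} (hdk : d < k) {α γ : ℝ} (hα0 : 0 ≤ α) (hγ : 0 < γ)
    (hkn : k ≤ n) (hn : 4 * (α + γ) * (((k - d : ℕ) : ℝ) * (k : ℝ)) / γ ≤ n) :
    (α + 3 * γ / 4) * (n : ℝ) ^ (k - d) ≤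
      (k - d).factorial * ((α + γ) * (n - d).choose (k - d)) := by
  obtain ⟨r, hr⟩ : ∃ r, r = k - d := ⟨_, rfl⟩
  rw [← hr] at hn ⊢
  have hn0 : (0:ℝ) < n := by exact_mod_cast (by omega : 0 < n)
  have h1 := Nat.pow_sub_le_descFactorial (n - d) r
  rw [Nat.descFactorial_eq_factorial_mul_choose] at h1
  have h2 : (n - k) ^ r ≤ r.factorial * (n - d).choose r :=
    (Nat.pow_le_pow_left (by omega) r).trans h1
  have h3 : ((n:ℝ) - k) ^ r ≤ r.factorial * (n - d).choose r := by
    rw [← Nat.cast_sub hkn]; exact_mod_cast h2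
  have hk1 : (k:ℝ) / n ≤ 1 := by rw [div_le_one hn0]; exact_mod_cast hkn
  have h4 := one_add_mul_le_pow (a := -((k:ℝ) / n)) (by linarith) r
  have h5 : ((n:ℝ) - k) ^ r = (n:ℝ) ^ r * (1 + -((k:ℝ) / n)) ^ r := by
    rw [← mul_pow]; congr 1; field_simp; ring
  have h6 : α + 3 * γ / 4 ≤ (α + γ) * (1 + r * -((k:ℝ) / n)) := by
    rw [div_le_iff₀ hγ] at hn
    have : (α + γ) * (r * ((k:ℝ) / n)) ≤ γ / 4 := by
      rw [← mul_div_assoc, ← mul_div_assoc, div_le_iff₀ hn0]; linarith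
    nlinarith
  calc (α + 3 * γ / 4) * (n : ℝ) ^ r ≤ (α + γ) * (1 + r * -((k:ℝ) / n)) * (n:ℝ) ^ r := by gcongr
    _ ≤ (α + γ) * (1 + -((k:ℝ) / n)) ^ r * (n:ℝ) ^ r := by gcongr
    _ = (α + γ) * ((n:ℝ) - k) ^ r := by rw [h5]; ring
    _ ≤ (α + γ) * (r.factorial * (n - d).choose r) := by gcongr
    _ = _ := by ring

/-- For `1 ≤ d < k`, `γ > 0` and `α = α_d(k)`, there are `C ≥ 1` and `n₀`
such that for every `n ≥ n₀` divisible by `k`, every `n`-vertex `k`-graph satisfying the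
Dirac-type condition admits a `C`-well-distributed fractional perfect matching, i.e. one
with `1/(C·n^{k-1}) ≤ x[e] ≤ C/n^{k-1}` for every edge `e`. -/
theorem exists_well_distributed_fpm (d k : ℕ) (hd : 1 ≤ d) (hdk : d < k)
    (γ : ℝ) (hγ : 0 < γ) (α : ℝ) (hα : IsDiracThreshold d k α) :
    ∃ C : ℝ, 1 ≤ C ∧ ∃ n₀ : ℕ, ∀ n : ℕ, n₀ ≤ n → k ∣ n →
      ∀ E : Finset (Finset (Fin n)), (∀ e ∈ E, e.card = k) →
        (α + γ) * ((n - d).choose (k - d) : ℝ) ≤ (minDeg E d : ℝ) →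
        ∃ x : Finset (Fin n) → ℝ, IsFPM E x ∧
          ∀ e ∈ E, 1 / (C * (n : ℝ) ^ (k - 1)) ≤ x e ∧ x e ≤ C / (n : ℝ) ^ (k - 1) := by
  classical
  have hα0 : 0 ≤ α := ge_of_tendsto' hα fun N => by positivity
  obtain ⟨m, hkm, hthr, hexp⟩ := exists_sample_size d k hdk γ hγ α hα0 hα
  let C : ℝ := max (16 * (m + 1)) (4 * (2 ^ (m + 1) * (k : ℝ) ^ k) + 1)
  have hC1 : 16 * ((m:ℝ) + 1) ≤ C := le_max_left _ _
  refine ⟨C, by linarith [(Nat.cast_nonneg m : (0:ℝ) ≤ m)],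
    k + 32 * (m + 1) ^ 3 + ⌈4 * (α + γ) * (((k - d : ℕ) : ℝ) * (k : ℝ)) / γ⌉₊, ?_⟩
  intro n hn _ E hE hmin
  have hkn : k ≤ n := by omega
  have hn32 : 32 * (m + 1) ^ 3 ≤ n := by omega
  have hnc : 4 * (α + γ) * (((k - d : ℕ) : ℝ) * (k : ℝ)) / γ ≤ n :=
    (Nat.le_ceil _).trans (Nat.cast_le.2 (by omega))
  have hp := choose_lower hdk hα0 hγ hkn hnc
  let G : Finset (Fin (m + 1) → Fin n) := univ.filter fun f =>
    ∀ S : Finset (Fin (m + 1)), S.card = d → mThreshold d k (m + 1) ≤ degS (pullback k E f) S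
  refine fpm_of_good (by omega) (by omega) hkm E hE G (fun i v => ?_) (fun f hf => ?_) C hC1
    (le_max_right _ _)
  · refine bad_card hdk (by omega) E hE (minDeg E d) (mThreshold d k (m + 1))
      (fun S hS => minDeg_le E S hS) (α + 3 * γ / 4) (γ / 4) (by positivity) (by linarith)
      (hp.trans (by gcongr)) (hthr.trans (le_of_eq (by ring))) hexp (by exact_mod_cast hn32) i v G
      (fun f _ h => mem_filter.2 ⟨mem_univ _, h⟩)
  · exact mThreshold_spec (by omega) _ (fun A hA => (mem_filter.1 hA).2.1) (mem_filter.1 hf).2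
end

section
/- Fix an integer k ≥ 2 and a constant C ≥ 1, and let G be a k-uniform hypergraph on n vertices. If x is a C-well-distributed fractional perfect matching of G, then h(G) − h(x) ≤ (2 ln C / k)·n. -/
/-!
Let `N = n ^ (k - 1)`. Double counting gives every fractional perfect matching total weight
`n / k` (`IsFPM.sum_eq`). If `y` is another fractional perfect matching, then `x` and `y` have the
same total weight, so Gibbs' inequality (`gibbs_term`, summed over the edges) yields
`h(y) ≤ ∑ y[e] ln(1/x[e])`. The weights `x[e]` lie in `[1/(CN), C/N]`, so every `ln(1/x[e])` is
within `ln C` of `ln N`. Hence `h(y) ≤ (n/k)(ln N + ln C)` while `h(x) ≥ (n/k)(ln N - ln C)`.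
-/

open Finset

/-- In a `k`-graph, a fractional perfect matching has total weight `n / k`, by double counting. -/
lemma IsFPM.sum_eq {n k : ℕ} {E : Finset (Finset (Fin n))} (hk : k ≠ 0)
    (hE : ∀ e ∈ E, e.card = k) {x : Finset (Fin n) → ℝ} (hx : IsFPM E x) :
    ∑ e ∈ E, x e = (n : ℝ) / k := by
  have h : ∑ v : Fin n, ∑ e ∈ E.filter (fun e => v ∈ e), x e = ∑ e ∈ E, (k : ℝ) * x e := by
    simp_rw [Finset.sum_filter]
    rw [Finset.sum_comm]
    refine Finset.sum_congr rfl fun e he => ?_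
    rw [← Finset.sum_filter, Finset.sum_const, nsmul_eq_mul]
    simp [hE e he]
  rw [Finset.sum_congr rfl fun v _ => hx.2.2 v, ← Finset.mul_sum] at h
  have hk' : (k : ℝ) ≠ 0 := by exact_mod_cast hk
  rw [eq_div_iff hk', mul_comm, ← h]
  simp

/-- The pointwise form of Gibbs' inequality. -/
lemma gibbs_term {a b : ℝ} (hb : 0 ≤ b) (ha : 0 < a) :
    b * Real.log (1 / b) ≤ b * Real.log (1 / a) + (a - b) := by
  rcases hb.eq_or_lt with rfl | hb
  · simpa using ha.le
  · have h := Real.log_le_sub_one_of_pos (div_pos ha hb)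
    rw [Real.log_div ha.ne' hb.ne'] at h
    have h2 := mul_le_mul_of_nonneg_left h hb.le
    have h3 : b * (a / b - 1) = a - b := by field_simp
    simp only [one_div, Real.log_inv]
    nlinarith

/-- If `x` is a `C`-well-distributed fractional perfect matching of a
`k`-graph `G` on `n` vertices (`k ≥ 2`, `C ≥ 1`), then `h(G) - h(x) ≤ (2 ln C / k)·n`. -/
theorem well_distributed_near_max_entropy (k n : ℕ) (hk : 2 ≤ k)
    (C : ℝ) (hC : 1 ≤ C)
    (E : Finset (Finset (Fin n))) (hE : ∀ e ∈ E, e.card = k)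
    (x : Finset (Fin n) → ℝ) (hx : IsFPM E x)
    (hwd : ∀ e ∈ E, 1 / (C * (n : ℝ) ^ (k - 1)) ≤ x e ∧ x e ≤ C / (n : ℝ) ^ (k - 1)) :
    graphEntropy E - fpmEntropy E x ≤ (2 * Real.log C / k) * n := by
  have hk0 : k ≠ 0 := by omega
  have hC0 : 0 < C := by linarith
  set N : ℝ := (n : ℝ) ^ (k - 1) with hN
  -- An edge has `k ≥ 2` vertices, so the existence of an edge forces `n > 0`.
  have hNpos : ∀ e ∈ E, 0 < N := fun e he => by
    have h1 := Finset.card_le_univ e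
    rw [hE e he, Fintype.card_fin] at h1
    have : (0 : ℝ) < n := by exact_mod_cast (by omega : 0 < n)
    positivity
  have hxpos : ∀ e ∈ E, 0 < x e := fun e he =>
    lt_of_lt_of_le (by have := hNpos e he; positivity) (hwd e he).1
  have hup : ∀ e ∈ E, Real.log (1 / x e) ≤ Real.log N + Real.log C := fun e he => by
    have hNe := hNpos e he
    have h := Real.log_le_log (by positivity) (hwd e he).1
    rw [one_div, Real.log_inv, Real.log_mul hC0.ne' hNe.ne'] at h
    rw [one_div, Real.log_inv]
    linarith
  have hlo : ∀ e ∈ E, Real.log N - Real.log C ≤ Real.log (1 / x e) := fun e he => by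
    have hNe := hNpos e he
    have h := Real.log_le_log (hxpos e he) (hwd e he).2
    rw [Real.log_div hC0.ne' hNe.ne'] at h
    rw [one_div, Real.log_inv]
    linarith
  have hsx := hx.sum_eq hk0 hE
  have hlow : (n : ℝ) / k * (Real.log N - Real.log C) ≤ fpmEntropy E x := by
    rw [← hsx, Finset.sum_mul]
    exact Finset.sum_le_sum fun e he => mul_le_mul_of_nonneg_left (hlo e he) (hx.1 e).1
  have hupp : graphEntropy E ≤ (n : ℝ) / k * (Real.log N + Real.log C) := by
    refine csSup_le ⟨_, x, hx, rfl⟩ ?_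
    rintro _ ⟨y, hy, rfl⟩
    have hsy := hy.sum_eq hk0 hE
    calc fpmEntropy E y
        ≤ ∑ e ∈ E, (y e * (Real.log N + Real.log C) + (x e - y e)) :=
          Finset.sum_le_sum fun e he => (gibbs_term (hy.1 e).1 (hxpos e he)).trans
            (by gcongr; exacts [(hy.1 e).1, hup e he])
      _ = (n : ℝ) / k * (Real.log N + Real.log C) := by
          rw [Finset.sum_add_distrib, Finset.sum_sub_distrib, ← Finset.sum_mul, hsx, hsy]
          ring
  calc graphEntropy E - fpmEntropy E x
      ≤ (n : ℝ) / k * (Real.log N + Real.log C) - (n : ℝ) / k * (Real.log N - Real.log C) :=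
        sub_le_sub hupp hlow
    _ = (2 * Real.log C / k) * n := by ring
end

section
/- Let k ≥ 2, let G be a k-uniform hypergraph, let x be a fractional perfect matching of G, and let U = (U_2, …, U_k) be a shifting structure on a pair of edges (e, f) of G intersecting in a single vertex, with associated edges e_1 = e, f_1 = f and e_i = U_i ∪ {u_i}, f_i = U_i ∪ {v_i} for 2 ≤ i ≤ k. Suppose Δ, η > 0 are such that x[e_i] ≥ 2Δ and x[f_i] ≤ η − Δ for all 1 ≤ i ≤ k. Then the fractional perfect matching shift_Δ(x, U), obtained from x by decreasing each x[e_i] by Δ and increasing each x[f_i] by Δ, satisfies h(shift_Δ(x, U)) − h(x) ≥ Δ·ln( x[e_1]·Δ^{k−1} / (2·η^k) ). -/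
/-!
Write `φ t = t ln (1/t)`. It is concave with `φ' t = -ln t - 1`, so its graph lies below its
tangents (`negMulLog_tangent`). With the tangents taken at the *new* weights, decreasing
`x[e_i]` by `Δ` changes the entropy by at least `Δ (ln (x[e_i] - Δ) + 1)`, and increasing
`x[f_i]` by `Δ` changes it by at least `-Δ (ln (x[f_i] + Δ) + 1)`. The constants cancel in pairs.
Since `x[e_i] ≥ 2Δ`, we have `x[e_1] - Δ ≥ x[e_1] / 2` and `x[e_i] - Δ ≥ Δ`, while
`x[f_i] + Δ ≤ η`; summing over the `k` pairs gives the bound.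

The `2k` edges involved are pairwise distinct: each `U_i` is nonempty and disjoint from the other
`U_j` and from `e ∪ f`, and no `e_i` is an `f_j` because one weight drops and the other rises.
-/

open Finset

/-- The tangent to the concave function `t ↦ t ln (1/t)` at `s > 0` lies above its graph. -/
lemma negMulLog_tangent (s t : ℝ) (hs : 0 < s) (ht : 0 ≤ t) :
    (t - s) * (Real.log s + 1) ≤ s * Real.log (1 / s) - t * Real.log (1 / t) := by
  rcases ht.eq_or_lt with rfl | ht
  · simp only [one_div, Real.log_inv]
    nlinarith
  · have h := Real.log_le_sub_one_of_pos (div_pos hs ht)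
    rw [Real.log_div hs.ne' ht.ne'] at h
    have h2 := mul_le_mul_of_nonneg_left h ht.le
    have h3 : t * (s / t - 1) = s - t := by field_simp
    rw [h3] at h2
    simp only [one_div, Real.log_inv]
    nlinarith

/-- The sets `insert (w i) (U i)`, with some subset of `g` in place of the one at index `z`, are
pairwise distinct when the nonempty sets `U i` are disjoint from each other and from `g`, and
every `w i` lies in `g`. -/
lemma shift_edges_injective {k n : ℕ} (z : Fin k) (w : Fin k → Fin n) (g : Finset (Fin n))
    (hw : ∀ i, w i ∈ g) (U : Fin k → Finset (Fin n))
    (hne : ∀ i, i ≠ z → (U i).Nonempty)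
    (hg : ∀ i, i ≠ z → Disjoint (U i) g)
    (hU : ∀ i j, i ≠ z → j ≠ z → i ≠ j → Disjoint (U i) (U j))
    (d : Fin k → Finset (Fin n)) (hz : d z ⊆ g)
    (hd : ∀ i, i ≠ z → d i = insert (w i) (U i)) : Function.Injective d := by
  have key : ∀ i j, i ≠ z → i ≠ j → d i ≠ d j := by
    intro i j hi hij h
    obtain ⟨a, ha⟩ := hne i hi
    have hag : a ∉ g := Finset.disjoint_left.mp (hg i hi) ha
    have haj : a ∈ d j := by rw [← h, hd i hi]; exact Finset.mem_insert_of_mem ha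
    by_cases hj : j = z
    · subst hj; exact hag (hz haj)
    · rw [hd j hj, Finset.mem_insert] at haj
      rcases haj with rfl | haj
      · exact hag (hw j)
      · exact Finset.disjoint_left.mp (hU i j hi hj hij) ha haj
  intro i j h
  by_contra hij
  by_cases hi : i = z
  · exact key j i (fun hj => hij (hi.trans hj.symm)) (Ne.symm hij) h.symm
  · exact key i j hi hij h

/-- Given a shifting structure `U = (U_2,…,U_k)` on a pair of edges
`(e,f)` meeting in the single vertex `v ⟨0, by omega⟩ = u ⟨0, by omega⟩`, with associated edges `e_1 = e`,
`f_1 = f`, `e_i = U_i ∪ {u_i}`, `f_i = U_i ∪ {v_i}`, if `x[e_i] ≥ 2Δ` and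
`x[f_i] ≤ η - Δ` for all `i`, then the shifted weighting `y = shift_Δ(x,U)` satisfies
`h(y) - h(x) ≥ Δ·ln(x[e_1]·Δ^{k-1}/(2·η^k))`. -/
theorem entropy_gain_of_shift (k n : ℕ) (hk : 2 ≤ k)
    (E : Finset (Finset (Fin n))) (hE : ∀ g ∈ E, g.card = k)
    (x : Finset (Fin n) → ℝ) (hx : IsFPM E x)
    -- the two edges e and f, meeting in the single vertex `v ⟨0, by omega⟩ = u ⟨0, by omega⟩`
    (v u : Fin k → Fin n) (hv : Function.Injective v) (hu : Function.Injective u)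
    (hvu : v ⟨0, by omega⟩ = u ⟨0, by omega⟩)
    (e f : Finset (Fin n))
    (he : e = Finset.image v Finset.univ) (hf : f = Finset.image u Finset.univ)
    (heE : e ∈ E) (hfE : f ∈ E) (hef : e ∩ f = {v ⟨0, by omega⟩})
    -- the shifting structure
    (U : Fin k → Finset (Fin n))
    (hUcard : ∀ i : Fin k, i ≠ ⟨0, by omega⟩ → (U i).card = k - 1)
    (hUef : ∀ i : Fin k, i ≠ ⟨0, by omega⟩ → Disjoint (U i) (e ∪ f))
    (hUdisj : ∀ i j : Fin k, i ≠ ⟨0, by omega⟩ → j ≠ ⟨0, by omega⟩ → i ≠ j → Disjoint (U i) (U j))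
    -- the associated edges e_i and f_i
    (ei fi : Fin k → Finset (Fin n))
    (hei0 : ei ⟨0, by omega⟩ = e) (hfi0 : fi ⟨0, by omega⟩ = f)
    (hei : ∀ i : Fin k, i ≠ ⟨0, by omega⟩ → ei i = insert (u i) (U i))
    (hfi : ∀ i : Fin k, i ≠ ⟨0, by omega⟩ → fi i = insert (v i) (U i))
    (heiE : ∀ i : Fin k, ei i ∈ E) (hfiE : ∀ i : Fin k, fi i ∈ E)
    -- the weight hypotheses
    (Δ η : ℝ) (hΔ : 0 < Δ) (hη : 0 < η)
    (hxe : ∀ i : Fin k, 2 * Δ ≤ x (ei i)) (hxf : ∀ i : Fin k, x (fi i) ≤ η - Δ)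
    -- the shifted weighting y = shift_Δ(x, U)
    (y : Finset (Fin n) → ℝ)
    (hyei : ∀ i : Fin k, y (ei i) = x (ei i) - Δ)
    (hyfi : ∀ i : Fin k, y (fi i) = x (fi i) + Δ)
    (hyother : ∀ g : Finset (Fin n), (∀ i : Fin k, g ≠ ei i ∧ g ≠ fi i) → y g = x g) :
    Δ * Real.log (x e * Δ ^ (k - 1) / (2 * η ^ k)) ≤ fpmEntropy E y - fpmEntropy E x := by
  set z : Fin k := ⟨0, by omega⟩ with hz
  have hne : ∀ i, i ≠ z → (U i).Nonempty := fun i hi => by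
    rw [← Finset.card_pos, hUcard i hi]; omega
  have hei_inj : Function.Injective ei :=
    shift_edges_injective z u (e ∪ f) (fun i => by simp [hf]) U hne hUef hUdisj ei
      (by rw [hei0]; exact Finset.subset_union_left) hei
  have hfi_inj : Function.Injective fi :=
    shift_edges_injective z v (e ∪ f) (fun i => by simp [he]) U hne hUef hUdisj fi
      (by rw [hfi0]; exact Finset.subset_union_right) hfi
  have hdisj : Disjoint (Finset.univ.image ei) (Finset.univ.image fi) := by
    rw [Finset.disjoint_left]
    intro g h1 h2
    simp only [Finset.mem_image, Finset.mem_univ, true_and] at h1 h2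
    obtain ⟨i, rfl⟩ := h1
    obtain ⟨j, hj⟩ := h2
    -- a common edge would have weight both `x - Δ` and `x + Δ` after the shift
    have h1 := hyei i
    have h2 := hyfi j
    rw [hj] at h2
    linarith
  have hsub : Finset.univ.image ei ∪ Finset.univ.image fi ⊆ E := by
    intro g hg
    simp only [Finset.mem_union, Finset.mem_image, Finset.mem_univ, true_and] at hg
    rcases hg with ⟨i, rfl⟩ | ⟨i, rfl⟩
    · exact heiE i
    · exact hfiE i
  -- only the shifted edges contribute to the change of entropy
  have hsum : fpmEntropy E y - fpmEntropy E x =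
      ∑ i, ((y (ei i) * Real.log (1 / y (ei i)) - x (ei i) * Real.log (1 / x (ei i))) +
        (y (fi i) * Real.log (1 / y (fi i)) - x (fi i) * Real.log (1 / x (fi i)))) := by
    unfold fpmEntropy
    rw [← Finset.sum_sub_distrib, ← Finset.sum_subset hsub, Finset.sum_union hdisj,
      Finset.sum_image hei_inj.injOn, Finset.sum_image hfi_inj.injOn, ← Finset.sum_add_distrib]
    intro g _ hg
    rw [hyother g, sub_self]
    intro i
    constructor <;> rintro rfl <;> apply hg <;> simp
  have hxe0 : 2 * Δ ≤ x e := hei0 ▸ hxe z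
  have hterm : ∀ i : Fin k,
      Δ * ((if i = z then Real.log (x e / 2) else Real.log Δ) - Real.log η) ≤
      (y (ei i) * Real.log (1 / y (ei i)) - x (ei i) * Real.log (1 / x (ei i))) +
        (y (fi i) * Real.log (1 / y (fi i)) - x (fi i) * Real.log (1 / x (fi i))) := by
    intro i
    have hxi := hxe i
    have hfi0' := (hx.1 (fi i)).1
    have h1 := negMulLog_tangent (x (ei i) - Δ) (x (ei i)) (by linarith) (by linarith)
    have h2 := negMulLog_tangent (x (fi i) + Δ) (x (fi i)) (by linarith) hfi0'
    have h3 : Real.log (x (fi i) + Δ) ≤ Real.log η :=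
      Real.log_le_log (by linarith) (by linarith [hxf i])
    have h4 : (if i = z then Real.log (x e / 2) else Real.log Δ) ≤ Real.log (x (ei i) - Δ) := by
      split_ifs with h
      · rw [h, hei0]
        exact Real.log_le_log (by linarith) (by linarith)
      · exact Real.log_le_log hΔ (by linarith)
    have h5 := mul_le_mul_of_nonneg_left (sub_le_sub h4 h3) hΔ.le
    rw [hyei, hyfi]
    linarith
  rw [hsum]
  refine le_trans (le_of_eq ?_) (Finset.sum_le_sum fun i _ => hterm i)
  have hlog : Real.log (x e * Δ ^ (k - 1) / (2 * η ^ k)) =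
      Real.log (x e / 2) + ((k - 1 : ℕ) : ℝ) * Real.log Δ - k * Real.log η := by
    have hpos : 0 < x e / 2 := by linarith
    rw [mul_div_mul_comm, ← Real.log_pow, ← Real.log_pow, ← mul_div_assoc,
      Real.log_div (by positivity) (by positivity), Real.log_mul (by positivity) (by positivity)]
  rw [← Finset.mul_sum, Finset.sum_sub_distrib, hlog,
    ← Finset.add_sum_erase _ _ (Finset.mem_univ z), if_pos rfl,
    Finset.sum_congr rfl (fun i hi => if_neg (Finset.ne_of_mem_erase hi))]
  simp
end

section
/- Fix an integer k ≥ 2 and a real β > 0. There exists n₀ = n₀(k, β) such that the following holds for all n ≥ n₀. Let G be an n-vertex k-uniform hypergraph, and let e = {v_1, …, v_k} and f = {u_1, …, u_k} be two edges of G intersecting in the single vertex u_1 = v_1. If each of the vertices u_2, …, u_k, v_2, …, v_k has degree at least (1/2 + β)·C(n−1, k−1) in G, then there exists a shifting structure on (e, f). -/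
/-!
The sets `U_i` are chosen greedily. When `U_i` is to be chosen, let `W` be the union of `e ∪ f` and
the sets chosen so far; its size is at most `s = 2k + k²`, independently of `n`. The link of `u_i`,
and likewise that of `v_i`, contains at least `(1/2 + β) N` of the `N = C(n-1, k-1)` candidate
`(k-1)`-sets not containing that vertex, and only `N - N'` candidates meet `W`, where `N' = C(n-|W|,
k-1)`. So the two links restricted to the complement of `W` have at least `(1 + 2β) N - 2 (N - N')`
elements in total, which exceeds `N'`, the number of `(k-1)`-sets avoiding `W`, as soon as `N - N' <
2β N`; they then share a set (`exists_common_link`). The last inequality holds for large `n`,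
because `N - N' ≤ s C(n-2, k-2) = s (k-1) N / (n-1)` (`choose_le_choose_sub_add`).
-/

open Finset

/-- Removing `s` points from an `(M+1)`-set destroys at most `s * C(M, r)` of its
`(r+1)`-subsets. -/
lemma choose_le_choose_sub_add (M r s : ℕ) :
    (M + 1).choose (r + 1) ≤ (M + 1 - s).choose (r + 1) + s * M.choose r := by
  induction s with
  | zero => simp
  | succ s ih =>
    have step : (M + 1 - s).choose (r + 1) ≤ (M + 1 - (s + 1)).choose (r + 1) + M.choose r := by
      rcases h : M + 1 - s with _ | t
      · simp
      · have h' : M + 1 - (s + 1) = t := by omega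
        have := Nat.choose_le_choose r (show t ≤ M by omega)
        rw [h', Nat.choose_succ_succ']
        omega
    rw [Nat.succ_mul]
    omega

/-- Inclusion–exclusion for the link of `a`, viewed inside the `(k-1)`-subsets of `{a}ᶜ`, and the
family of `(k-1)`-sets avoiding `W`. -/
lemma degS_add_choose_le {n k : ℕ} (E : Finset (Finset (Fin n))) (hE : ∀ g ∈ E, g.card = k)
    (W : Finset (Fin n)) (a : Fin n) (ha : a ∈ W) :
    degS E {a} + (n - W.card).choose (k - 1) ≤
      ((powersetCard (k - 1) Wᶜ).filter (fun T => insert a T ∈ E)).card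
        + (n - 1).choose (k - 1) := by
  set L := (E.filter (fun g => {a} ⊆ g)).image (fun g => g.erase a) with hL
  have hcard : L.card = degS E {a} := by
    rw [hL, card_image_of_injOn]
    · rfl
    · intro x hx y hy hxy
      simp only [coe_filter, Set.mem_ofPred_eq, singleton_subset_iff] at hx hy
      rw [← insert_erase hx.2, ← insert_erase hy.2]
      exact congrArg (insert a) hxy
  have hsub : L ∪ powersetCard (k - 1) Wᶜ ⊆ powersetCard (k - 1) {a}ᶜ := by
    apply union_subset
    · intro T hT
      obtain ⟨g, hg, rfl⟩ := mem_image.1 hT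
      simp only [mem_filter, singleton_subset_iff] at hg
      rw [mem_powersetCard, card_erase_of_mem hg.2, hE g hg.1]
      refine ⟨fun x hx => ?_, rfl⟩
      simpa using (mem_erase.1 hx).1
    · exact powersetCard_mono (compl_subset_compl.2 (singleton_subset_iff.2 ha))
  have hinter : L ∩ powersetCard (k - 1) Wᶜ ⊆
      (powersetCard (k - 1) Wᶜ).filter (fun T => insert a T ∈ E) := by
    intro T hT
    obtain ⟨h1, h2⟩ := mem_inter.1 hT
    obtain ⟨g, hg, rfl⟩ := mem_image.1 h1
    simp only [mem_filter, singleton_subset_iff] at hg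
    refine mem_filter.2 ⟨h2, ?_⟩
    simpa [insert_erase hg.2] using hg.1
  have h1 := card_le_card hsub
  have h2 := card_le_card hinter
  have h3 := card_union_add_card_inter L (powersetCard (k - 1) Wᶜ)
  simp only [card_powersetCard, card_compl, Fintype.card_fin, card_singleton] at h1 h3
  omega

/-- If the links of `a` and `b` are large enough, pigeonhole among the `(k-1)`-sets avoiding `W`
yields a common element of the two links. -/
lemma exists_common_link {n k : ℕ} (E : Finset (Finset (Fin n))) (hE : ∀ g ∈ E, g.card = k)
    (W : Finset (Fin n)) (a b : Fin n) (ha : a ∈ W) (hb : b ∈ W)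
    (h : 2 * (n - 1).choose (k - 1) <
      degS E {a} + degS E {b} + (n - W.card).choose (k - 1)) :
    ∃ T : Finset (Fin n), T.card = k - 1 ∧ Disjoint T W ∧ insert a T ∈ E ∧ insert b T ∈ E := by
  have h1 := degS_add_choose_le E hE W a ha
  have h2 := degS_add_choose_le E hE W b hb
  have hP : (powersetCard (k - 1) Wᶜ).card = (n - W.card).choose (k - 1) := by
    simp [card_powersetCard, card_compl]
  obtain ⟨T, hT⟩ := inter_nonempty_of_card_lt_card_add_card
    (filter_subset (fun T => insert a T ∈ E) (powersetCard (k - 1) Wᶜ))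
    (filter_subset (fun T => insert b T ∈ E) (powersetCard (k - 1) Wᶜ)) (by omega)
  simp only [mem_inter, mem_filter, mem_powersetCard] at hT
  exact ⟨T, hT.1.1.2, subset_compl_iff_disjoint_right.1 hT.1.1.1, hT.1.2, hT.2.2⟩

/-- Greedy selection of pairwise disjoint `q`-sets avoiding `F`, provided that each single choice
is possible outside any superset of `F` having at most `#F + q * #ι` elements. -/
lemma exists_disjoint_family {ι α : Type*} [Fintype ι] [DecidableEq ι] [DecidableEq α]
    (q : ℕ) (F : Finset α) (Q : ι → Finset α → Prop) (J : Finset ι)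
    (h : ∀ i ∈ J, ∀ W : Finset α, F ⊆ W → W.card ≤ F.card + q * Fintype.card ι →
      ∃ T : Finset α, T.card = q ∧ Disjoint T W ∧ Q i T) :
    ∃ U : ι → Finset α, (∀ i ∈ J, (U i).card = q) ∧ (∀ i ∈ J, Disjoint (U i) F) ∧
      (∀ i ∈ J, ∀ j ∈ J, i ≠ j → Disjoint (U i) (U j)) ∧ ∀ i ∈ J, Q i (U i) := by
  induction J using Finset.induction_on with
  | empty => exact ⟨fun _ => ∅, by simp⟩
  | insert a J haJ ih =>
    obtain ⟨U, hc, hF, hd, hQ⟩ := ih fun i hi => h i (mem_insert_of_mem hi)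
    have hW : (F ∪ J.biUnion U).card ≤ F.card + q * Fintype.card ι := by
      have h1 : (J.biUnion U).card ≤ J.card * q :=
        card_biUnion_le_card_mul _ _ _ fun i hi => (hc i hi).le
      have h2 : J.card * q ≤ q * Fintype.card ι := by
        rw [mul_comm]
        exact Nat.mul_le_mul_left q (card_le_univ J)
      have h3 := card_union_le F (J.biUnion U)
      omega
    obtain ⟨T, hTc, hTd, hTQ⟩ := h a (mem_insert_self a J) _ subset_union_left hW
    obtain ⟨hTF, hTU⟩ := disjoint_union_right.1 hTd
    rw [disjoint_biUnion_right] at hTU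
    have hne : ∀ i ∈ J, i ≠ a := fun i hi hia => haJ (hia ▸ hi)
    refine ⟨Function.update U a T, ?_, ?_, ?_, ?_⟩
    · intro i hi
      rcases mem_insert.1 hi with rfl | hi
      · simpa using hTc
      · simpa [hne i hi] using hc i hi
    · intro i hi
      rcases mem_insert.1 hi with rfl | hi
      · simpa using hTF
      · simpa [hne i hi] using hF i hi
    · intro i hi j hj hij
      rcases mem_insert.1 hi with rfl | hi' <;> rcases mem_insert.1 hj with rfl | hj'
      · exact absurd rfl hij
      · simpa [hne j hj'] using hTU j hj'
      · simpa [hne i hi'] using (hTU i hi').symm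
      · simpa [hne i hi', hne j hj'] using hd i hi' j hj' hij
    · intro i hi
      rcases mem_insert.1 hi with rfl | hi
      · simpa using hTQ
      · simpa [hne i hi] using hQ i hi

/-- For large `n`, more than a `1 - 2β` fraction of `C(n-1, r+1)` remains after forbidding at most
`s + 1` of the `n` points. -/
lemma choose_lt_of_large (r s : ℕ) (β : ℝ) (hβ : 0 < β) :
    ∃ n₀ : ℕ, ∀ n : ℕ, n₀ ≤ n → ∀ w : ℕ, w ≤ s + 1 →
      (1 - 2 * β) * ((n - 1).choose (r + 1) : ℝ) < ((n - w).choose (r + 1) : ℝ) := by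
  obtain ⟨m, hm⟩ := exists_nat_gt ((s : ℝ) * (r + 1) / (2 * β))
  refine ⟨m + r + 2, fun n hn w hw => ?_⟩
  obtain ⟨M, rfl⟩ : ∃ M, n = M + 2 := ⟨n - 2, by omega⟩
  rw [show M + 2 - 1 = M + 1 by omega]
  have hmono : (M + 1 - s).choose (r + 1) ≤ (M + 2 - w).choose (r + 1) :=
    Nat.choose_le_choose _ (by omega)
  have hle := choose_le_choose_sub_add M r s
  have hpos : 0 < (M + 1).choose (r + 1) := Nat.choose_pos (by omega)
  have hid := Nat.add_one_mul_choose_eq M r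
  have hMm : m ≤ M + 1 := by omega
  rify at hmono hle hpos hid hMm
  rw [div_lt_iff₀ (by positivity)] at hm
  -- The lost sets number at most `s * C(M, r) = s * (r + 1) / (M + 1) * C(M + 1, r + 1)`.
  have key : (s : ℝ) * M.choose r < 2 * β * (M + 1).choose (r + 1) := by
    have hM : (0 : ℝ) < M + 1 := by positivity
    have h1 : (s : ℝ) * (r + 1) < (M + 1) * (2 * β) :=
      hm.trans_le (mul_le_mul_of_nonneg_right hMm (by positivity))
    refine lt_of_mul_lt_mul_left ?_ hM.le
    calc ((M : ℝ) + 1) * (s * M.choose r) = s * (r + 1) * (M + 1).choose (r + 1) := by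
          linear_combination (s : ℝ) * hid
      _ < (M + 1) * (2 * β) * (M + 1).choose (r + 1) := mul_lt_mul_of_pos_right h1 hpos
      _ = _ := by ring
  linarith

/-- For `k ≥ 2` and `β > 0` there is `n₀` such that for all `n ≥ n₀`:
if `e = {v_1,…,v_k}` and `f = {u_1,…,u_k}` are edges of an `n`-vertex `k`-graph meeting in
the single vertex `u_1 = v_1`, and each of `u_2,…,u_k,v_2,…,v_k` has degree at least
`(1/2+β)·C(n-1,k-1)`, then there is a shifting structure on `(e,f)`. -/
theorem exists_shifting_structure (k : ℕ) (hk : 2 ≤ k) (β : ℝ) (hβ : 0 < β) :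
    ∃ n₀ : ℕ, ∀ n : ℕ, n₀ ≤ n →
      ∀ E : Finset (Finset (Fin n)), (∀ g ∈ E, g.card = k) →
      ∀ v u : Fin k → Fin n, Function.Injective v → Function.Injective u → v ⟨0, by omega⟩ = u ⟨0, by omega⟩ →
      ∀ e f : Finset (Fin n),
        e = Finset.image v Finset.univ → f = Finset.image u Finset.univ →
        e ∈ E → f ∈ E → e ∩ f = {v ⟨0, by omega⟩} →
        (∀ i : Fin k, i ≠ ⟨0, by omega⟩ →
          (1 / 2 + β) * ((n - 1).choose (k - 1) : ℝ) ≤ (degS E {u i} : ℝ) ∧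
          (1 / 2 + β) * ((n - 1).choose (k - 1) : ℝ) ≤ (degS E {v i} : ℝ)) →
        ∃ U : Fin k → Finset (Fin n),
          (∀ i : Fin k, i ≠ ⟨0, by omega⟩ → (U i).card = k - 1) ∧
          (∀ i : Fin k, i ≠ ⟨0, by omega⟩ → Disjoint (U i) (e ∪ f)) ∧
          (∀ i j : Fin k, i ≠ ⟨0, by omega⟩ → j ≠ ⟨0, by omega⟩ → i ≠ j → Disjoint (U i) (U j)) ∧
          (∀ i : Fin k, i ≠ ⟨0, by omega⟩ → insert (u i) (U i) ∈ E ∧ insert (v i) (U i) ∈ E) := by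
  obtain ⟨r, rfl⟩ : ∃ r, k = r + 2 := ⟨k - 2, by omega⟩
  obtain ⟨n₀, hn₀⟩ :=
    choose_lt_of_large r (2 * (r + 2) + (r + 1) * (r + 2)) β hβ
  refine ⟨n₀, ?_⟩
  intro n hn E hE v u hv hu h0 e f he hf heE hfE hef hdeg
  have hcard : (e ∪ f).card ≤ 2 * (r + 2) := by
    have := card_union_le e f
    rw [hE e heE, hE f hfE] at this
    omega
  obtain ⟨U, hU1, hU2, hU3, hU4⟩ := exists_disjoint_family (r + 1) (e ∪ f)
    (fun i T => insert (u i) T ∈ E ∧ insert (v i) T ∈ E)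
    (univ.erase (⟨0, by omega⟩ : Fin (r + 2))) (by
      intro i hi W hFW hW
      obtain ⟨hdu, hdv⟩ := hdeg i (ne_of_mem_erase hi)
      rw [Fintype.card_fin] at hW
      have hlt := hn₀ n hn W.card (by omega)
      rw [show r + 2 - 1 = r + 1 by omega] at hdu hdv
      refine exists_common_link E hE W (u i) (v i)
        (hFW (mem_union_right _ (hf ▸ mem_image_of_mem u (mem_univ i))))
        (hFW (mem_union_left _ (he ▸ mem_image_of_mem v (mem_univ i)))) ?_
      rw [show r + 2 - 1 = r + 1 by omega]
      rify
      linarith)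
  have hmem : ∀ i : Fin (r + 2), i ≠ ⟨0, by omega⟩ →
      i ∈ univ.erase (⟨0, by omega⟩ : Fin (r + 2)) :=
    fun i hi => mem_erase.2 ⟨hi, mem_univ i⟩
  exact ⟨U, fun i hi => hU1 i (hmem i hi), fun i hi => hU2 i (hmem i hi),
    fun i j hi hj hij => hU3 i (hmem i hi) j (hmem j hj) hij, fun i hi => hU4 i (hmem i hi)⟩
end
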